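/- arXiv:1804.09449 — 3 statements merged into one kernel-verified Lean document; each statement's English description precedes it below -/
import Mathlib

section
/- Let G be a finite simple bridgeless cubic graph and let e be any edge of G. Then G admits a nowhere-zero Z_2^3-flow θ such that the edge e is poor with respect to θ. -/
open SimpleGraph

/-- A proper edge-coloring: distinct edges of `G` sharing an endpoint get different colors. -/
def IsProperEdgeColoring {V C : Type*} (G : SimpleGraph V) (c : Sym2 V → C) : Prop :=
  ∀ e ∈ G.edgeSet, ∀ f ∈ G.edgeSet, e ≠ f → (∃ v : V, v ∈ e ∧ v ∈ f) → c e ≠ c f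

/-- `S_c(v)`: the set of colors appearing on edges incident to `v`. -/
def colorSet {V C : Type*} (G : SimpleGraph V) (c : Sym2 V → C) (v : V) : Set C :=
  c '' G.incidenceSet v

/-- The edge `uv` is poor: exactly 3 colors appear around its endpoints. -/
def IsPoorAt {V C : Type*} (G : SimpleGraph V) (c : Sym2 V → C) (u v : V) : Prop :=
  (colorSet G c u ∪ colorSet G c v).ncard = 3

/-- The edge `uv` is rich: exactly 5 colors appear around its endpoints. -/
def IsRichAt {V C : Type*} (G : SimpleGraph V) (c : Sym2 V → C) (u v : V) : Prop :=
  (colorSet G c u ∪ colorSet G c v).ncard = 5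

/-- A normal edge-coloring: a proper edge-coloring in which every edge is poor or rich. -/
def IsNormalEdgeColoring {V C : Type*} (G : SimpleGraph V) (c : Sym2 V → C) : Prop :=
  IsProperEdgeColoring G c ∧
    ∀ u v : V, G.Adj u v → IsPoorAt G c u v ∨ IsRichAt G c u v

/-- A nowhere-zero flow with values in an additive group `M` (all elements self-inverse in our
applications): nonzero on every edge, and at every vertex the values on incident edges sum to 0. -/
def IsNowhereZeroFlow {V M : Type*} [AddCommMonoid M] (G : SimpleGraph V)
    (θ : Sym2 V → M) : Prop :=
  (∀ e ∈ G.edgeSet, θ e ≠ 0) ∧ ∀ v : V, ∑ᶠ e ∈ G.incidenceSet v, θ e = 0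

/-- `G` is `k`-edge-connected: connected, and still connected after deleting any set of
fewer than `k` edges. -/
def EdgeConnGe {V : Type*} (G : SimpleGraph V) (k : ℕ) : Prop :=
  G.Connected ∧ ∀ s : Set (Sym2 V), s.ncard < k → (G.deleteEdges s).Connected

/-- `G` is cubic: every vertex has degree 3. -/
def IsCubic {V : Type*} (G : SimpleGraph V) : Prop :=
  ∀ v : V, (G.neighborSet v).ncard = 3

/-- `G` is bridgeless: no edge is a bridge. -/
def Bridgeless {V : Type*} (G : SimpleGraph V) : Prop :=
  ∀ e ∈ G.edgeSet, ¬ G.IsBridge e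

open SimpleGraph

namespace PF
set_option linter.unusedSectionVars false
open Finset Classical

abbrev K4 := ZMod 2 × ZMod 2
universe u v
variable {V : Type u} {E : Type v} [Fintype V] [Fintype E]

noncomputable def bd {A : Type*} [AddCommGroup A] (s t : E → V) (g : E → A) (v : V) : A :=
  ∑ e, ((if s e = v then g e else 0) - (if t e = v then g e else 0))

lemma bd_add {A : Type*} [AddCommGroup A] (s t : E → V) (g h : E → A) :
    bd s t (g + h) = bd s t g + bd s t h := by
  funext v
  simp only [bd, Pi.add_apply, ← sum_add_distrib]
  refine sum_congr rfl fun e _ => ?_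
  split_ifs <;> abel

lemma bd_zero {A : Type*} [AddCommGroup A] (s t : E → V) : bd s t (0 : E → A) = 0 := by
  funext v; simp [bd]

lemma bd_single {A : Type*} [AddCommGroup A] (s t : E → V) (p : E) (k : A) :
    bd s t (Pi.single p k) = Pi.single (s p) k - Pi.single (t p) k := by
  funext v
  unfold bd
  rw [sum_eq_single p]
  · simp only [Pi.single_eq_same, Pi.sub_apply, Pi.single_apply, eq_comm]
  · intro b _ hb; simp [Pi.single_eq_of_ne hb]
  · simp

lemma sum_bd {A : Type*} [AddCommGroup A] (s t : E → V) (g : E → A) (S : Finset V) :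
    ∑ v ∈ S, bd s t g v =
      ∑ e, ((if s e ∈ S then g e else 0) - (if t e ∈ S then g e else 0)) := by
  unfold bd
  rw [sum_comm]
  refine sum_congr rfl fun e _ => ?_
  rw [sum_sub_distrib]
  simp

lemma sum_bd_univ {A : Type*} [AddCommGroup A] (s t : E → V) (g : E → A) :
    ∑ v, bd s t g v = 0 := by
  rw [sum_bd]; simp

/-- edges between A and B -/
noncomputable def eb (s t : E → V) (A B : Finset V) : Finset E :=
  univ.filter fun e => (s e ∈ A ∧ t e ∈ B) ∨ (s e ∈ B ∧ t e ∈ A)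

lemma mem_eb {s t : E → V} {A B : Finset V} {e : E} :
    e ∈ eb s t A B ↔ (s e ∈ A ∧ t e ∈ B) ∨ (s e ∈ B ∧ t e ∈ A) := by simp [eb]

lemma eb_comm (s t : E → V) (A B : Finset V) : eb s t A B = eb s t B A := by
  ext e; simp only [mem_eb]; tauto

noncomputable def cross (s t : E → V) (S : Finset V) : Finset E := eb s t S Sᶜ

lemma mem_cross {s t : E → V} {S : Finset V} {e : E} :
    e ∈ cross s t S ↔ (s e ∈ S ∧ t e ∉ S) ∨ (s e ∉ S ∧ t e ∈ S) := by
  simp [cross, mem_eb]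

lemma cross_compl (s t : E → V) (S : Finset V) : cross s t Sᶜ = cross s t S := by
  ext e; simp only [mem_cross, mem_compl]; tauto

lemma sum_bd_two {A : Type*} [AddCommGroup A] (h2 : ∀ a : A, a + a = 0) (s t : E → V)
    (g : E → A) (S : Finset V) : ∑ v ∈ S, bd s t g v = ∑ e ∈ cross s t S, g e := by
  have hn : ∀ a : A, -a = a := fun a => neg_eq_of_add_eq_zero_left (h2 a)
  rw [sum_bd, ← sum_filter_add_sum_filter_not univ (fun e => e ∈ cross s t S)]
  have : (univ.filter fun e => e ∈ cross s t S) = cross s t S := by ext; simp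
  rw [this]
  have h0 : ∑ x with x ∉ cross s t S, ((if s x ∈ S then g x else 0) - (if t x ∈ S then g x else 0)) = 0 := by
    refine sum_eq_zero fun e he => ?_
    simp only [mem_filter, mem_cross, mem_univ, true_and] at he
    by_cases h1 : s e ∈ S <;> by_cases h2 : t e ∈ S <;> simp_all
  rw [h0, add_zero]
  refine sum_congr rfl fun e he => ?_
  rw [mem_cross] at he
  rcases he with ⟨h1, h2⟩ | ⟨h1, h2⟩ <;> simp [h1, h2, hn]

lemma K_two (a : K4) : a + a = 0 := by revert a; decide
lemma K_neg (a : K4) : -a = a := by revert a; decide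

def GoodR (s t : E → V) (σ : Prop) (u : V) (f : E → ZMod 2) (U : Finset V) : Prop :=
  (∀ e, f e ≠ 0 → s e ∈ U ∧ t e ∈ U) ∧ bd s t f = 0 ∧
  ∀ D : V → K4, (∀ v, v ∉ U → D v = 0) → ∑ v, D v = 0 → (σ → D u ≠ 0) →
    ∃ g : E → K4, (∀ e, ¬ (s e ∈ U ∧ t e ∈ U) → g e = 0) ∧ bd s t g = D ∧
      ∀ e, s e ∈ U → t e ∈ U → f e = 0 → g e ≠ 0

def Good (s t : E → V) (f : E → ZMod 2) (U : Finset V) : Prop :=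
  (∀ e, f e ≠ 0 → s e ∈ U ∧ t e ∈ U) ∧ bd s t f = 0 ∧
  ∀ D : V → K4, (∀ v, v ∉ U → D v = 0) → ∑ v, D v = 0 →
    ∃ g : E → K4, (∀ e, ¬ (s e ∈ U ∧ t e ∈ U) → g e = 0) ∧ bd s t g = D ∧
      ∀ e, s e ∈ U → t e ∈ U → f e = 0 → g e ≠ 0

def Span (s t : E → V) (F : Set E) (W : Finset V) : Prop :=
  ∀ D : V → K4, (∀ v, v ∉ W → D v = 0) → ∑ v, D v = 0 →
    ∃ g : E → K4, (∀ e, e ∉ F → g e = 0) ∧ bd s t g = D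

lemma bd_supp {A : Type*} [AddCommGroup A] (s t : E → V) (g : E → A) (W : Finset V)
    (hg : ∀ e, ¬ (s e ∈ W ∧ t e ∈ W) → g e = 0) (v : V) (hv : v ∉ W) : bd s t g v = 0 := by
  unfold bd
  refine sum_eq_zero fun e _ => ?_
  by_cases h : s e ∈ W ∧ t e ∈ W
  · have h1 : s e ≠ v := fun h' => hv (h' ▸ h.1)
    have h2 : t e ≠ v := fun h' => hv (h' ▸ h.2)
    simp [h1, h2]
  · simp [hg e h]

lemma good_of_span (s t : E → V) (f : E → ZMod 2) (W : Finset V)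
    (hf : ∀ e, f e ≠ 0 → s e ∈ W ∧ t e ∈ W) (hb : bd s t f = 0)
    (hs : Span s t {e | f e ≠ 0} W) : Good s t f W := by
  refine ⟨hf, hb, fun D hD hsum => ?_⟩
  let g0 : E → K4 := fun e => if (s e ∈ W ∧ t e ∈ W) ∧ f e = 0 then (1, 0) else 0
  have hg0 : ∀ e, ¬ (s e ∈ W ∧ t e ∈ W) → g0 e = 0 := by
    intro e he; simp only [g0]; rw [if_neg]; tauto
  obtain ⟨g1, h1, h2⟩ := hs (D - bd s t g0) (by
    intro v hv
    simp [hD v hv, bd_supp s t g0 W hg0 v hv]) (by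
    simp [sum_sub_distrib, hsum, sum_bd_univ])
  refine ⟨g0 + g1, ?_, ?_, ?_⟩
  · intro e he
    have : f e = 0 := by by_contra h; exact he (hf e h)
    simp [hg0 e he, h1 e (by simpa using this)]
  · rw [bd_add, h2]; abel
  · intro e he1 he2 he
    have : g0 e = (1, 0) := by simp only [g0]; rw [if_pos]; exact ⟨⟨he1, he2⟩, he⟩
    simp [this, h1 e (by simpa using he)]

lemma span_singleton (s t : E → V) (F : Set E) (v : V) : Span s t F {v} := by
  intro D hD hsum
  refine ⟨0, fun _ _ => rfl, ?_⟩
  rw [bd_zero]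
  have hv : D v = 0 := by
    rw [sum_eq_single v] at hsum
    · exact hsum
    · intro b _ hb; exact hD b (by simpa using hb)
    · simp
  funext x
  by_cases hx : x = v
  · simp [hx, hv]
  · simp [hD x (by simpa using hx)]

lemma span_insert (s t : E → V) (F : Set E) (W : Finset V) (p : E) (x y : V)
    (hp : (s p = x ∧ t p = y) ∨ (s p = y ∧ t p = x)) (hx : x ∈ W) (hy : y ∉ W)
    (hs : Span s t F W) : Span s t (insert p F) (insert y W) := by
  intro D hD hsum
  have hb : bd s t (Pi.single p (D y)) = Pi.single x (D y) + Pi.single y (D y) := by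
    have hn : ∀ z : V, -(Pi.single z (D y) : V → K4) = Pi.single z (D y) := by
      intro z; rw [← Pi.single_neg, K_neg]
    rw [bd_single]
    rcases hp with ⟨h1, h2⟩ | ⟨h1, h2⟩ <;> rw [h1, h2, sub_eq_add_neg, hn]
    rw [add_comm]
  obtain ⟨g, h1, h2⟩ := hs (D - bd s t (Pi.single p (D y))) (by
    intro v hv
    rw [hb]
    have hvx : v ≠ x := fun h => hv (h ▸ hx)
    by_cases hvy : v = y
    · subst hvy; simp [Pi.single_eq_of_ne hvx]
    · simp [Pi.single_eq_of_ne hvx, Pi.single_eq_of_ne hvy, hD v (by simp [hv, hvy])]) (by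
    simp [sum_sub_distrib, hsum, sum_bd_univ])
  refine ⟨g + Pi.single p (D y), ?_, ?_⟩
  · intro e he
    simp only [Set.mem_insert_iff, not_or] at he
    simp [h1 e he.2, Pi.single_eq_of_ne he.1]
  · rw [bd_add, h2]; abel

lemma choose_ab : ∀ r δ : K4, ∃ a b : K4, a ≠ 0 ∧ b ≠ 0 ∧ a + b = r ∧ a ≠ δ := by decide

set_option maxHeartbeats 1000000 in
lemma merge (s t : E → V) (σ : Prop) (u : V) (fU fW : E → ZMod 2) (U W : Finset V)
    (hd : Disjoint U W) (hU : GoodR s t σ u fU U) (hW : Good s t fW W) (p q : E)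
    (hpq : p ≠ q) (hp : p ∈ eb s t U W) (hq : q ∈ eb s t U W)
    (hσ : σ → u ∈ U ∧ (s p = u ∨ t p = u) ∧ s q ≠ u ∧ t q ≠ u) :
    Good s t (fU + fW) (U ∪ W) := by
  obtain ⟨hU1, hU2, hU3⟩ := hU
  obtain ⟨hW1, hW2, hW3⟩ := hW
  have dj : ∀ v, v ∈ U → v ∉ W := fun v h h' => disjoint_left.1 hd h h'
  refine ⟨?_, ?_, ?_⟩
  · intro e he
    by_cases h : fU e = 0
    · have := hW1 e (by simpa [h] using he)
      simp [this]
    · have := hU1 e h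
      simp [this]
  · rw [bd_add, hU2, hW2, add_zero]
  intro D hD hsum
  let h : E → K4 := fun e => if e ∈ eb s t U W ∧ e ≠ p ∧ e ≠ q then (1, 0) else 0
  obtain ⟨a, b, ha, hb, hab, haδ⟩ := choose_ab (∑ v ∈ W, D v - ∑ e, h e) (D u - bd s t h u)
  let g0 : E → K4 := h + Pi.single p a + Pi.single q b
  have hhp : h p = 0 := by simp [h]
  have hhq : h q = 0 := by simp [h]
  have g0p : g0 p = a := by simp [g0, hhp, Pi.single_eq_of_ne hpq]
  have g0q : g0 q = b := by simp [g0, hhq, Pi.single_eq_of_ne hpq.symm]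
  have g0e : ∀ e, e ≠ p → e ≠ q → g0 e = h e := by
    intro e h1 h2; simp [g0, Pi.single_eq_of_ne h1, Pi.single_eq_of_ne h2]
  have g0off : ∀ e, e ∉ eb s t U W → g0 e = 0 := by
    intro e he
    rw [g0e e (fun h => he (h ▸ hp)) (fun h => he (h ▸ hq))]
    simp [h, he]
  have g0on : ∀ e, e ∈ eb s t U W → g0 e ≠ 0 := by
    intro e he
    by_cases h1 : e = p
    · rw [h1, g0p]; exact ha
    by_cases h2 : e = q
    · rw [h2, g0q]; exact hb
    rw [g0e e h1 h2]; simp [h, he, h1, h2]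
  have g0sum : ∑ e, g0 e = ∑ v ∈ W, D v := by
    simp only [g0, Pi.add_apply, sum_add_distrib, sum_pi_single', mem_univ, if_true]
    rw [add_assoc, hab]; abel
  have g0W : ∑ v ∈ W, bd s t g0 v = ∑ v ∈ W, D v := by
    rw [sum_bd, ← g0sum]
    refine sum_congr rfl fun e _ => ?_
    by_cases he : e ∈ eb s t U W
    · rcases mem_eb.1 he with ⟨h1, h2⟩ | ⟨h1, h2⟩
      · simp [h2, dj _ h1, K_neg]
      · simp [h1, dj _ h2]
    · simp [g0off e he]
  have g0supp : ∀ v, v ∉ U ∪ W → bd s t g0 v = 0 := by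
    apply bd_supp
    intro e he
    apply g0off
    intro h'
    apply he
    simp only [mem_union]
    rcases mem_eb.1 h' with h' | h' <;> tauto
  let D' : V → K4 := D - bd s t g0
  have hD' : ∀ v, v ∉ U ∪ W → D' v = 0 := by
    intro v hv; simp [D', hD v hv, g0supp v hv]
  have sW : ∑ v ∈ W, D' v = 0 := by simp [D', sum_sub_distrib, g0W]
  have sA : ∑ v, D' v = 0 := by simp [D', sum_sub_distrib, sum_bd_univ, hsum]
  have sU : ∑ v ∈ U, D' v = 0 := by
    have : ∑ v ∈ U ∪ W, D' v = ∑ v, D' v :=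
      sum_subset (subset_univ _) (fun v _ hv => hD' v hv)
    rw [sum_union hd, sW, add_zero, sA] at this
    exact this
  obtain ⟨gW, w1, w2, w3⟩ := hW3 (fun v => if v ∈ W then D' v else 0)
    (fun v hv => by simp [hv]) (by simpa [sum_ite_mem] using sW)
  obtain ⟨gU, u1, u2, u3⟩ := hU3 (fun v => if v ∈ U then D' v else 0)
    (fun v hv => by simp [hv]) (by simpa [sum_ite_mem] using sU) (by
      intro hs
      obtain ⟨hu, hpu, hqu1, hqu2⟩ := hσ hs
      simp only [hu, if_true]
      have e1 : bd s t g0 u = bd s t h u + a := by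
        simp only [g0, bd_add, bd_single, Pi.add_apply, Pi.sub_apply, Pi.single_eq_of_ne hqu1.symm,
          Pi.single_eq_of_ne hqu2.symm]
        rcases mem_eb.1 hp with ⟨h1, h2⟩ | ⟨h1, h2⟩
        · have : t p ≠ u := fun h => dj u hu (h ▸ h2)
          have h3 : s p = u := by tauto
          simp [h3, Pi.single_eq_of_ne this.symm]
        · have : s p ≠ u := fun h => dj u hu (h ▸ h1)
          have h3 : t p = u := by tauto
          simp [h3, Pi.single_eq_of_ne this.symm, K_neg]
      simp only [D', Pi.sub_apply, e1]
      intro h0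
      apply haδ
      rw [sub_add_eq_sub_sub, sub_eq_zero] at h0
      exact h0.symm)
  refine ⟨g0 + gU + gW, ?_, ?_, ?_⟩
  · intro e he
    simp only [mem_union] at he
    have h1 := u1 e (by tauto)
    have h2 := w1 e (by tauto)
    have h3 := g0off e (by rw [mem_eb]; tauto)
    simp [h1, h2, h3]
  · rw [bd_add, bd_add, u2, w2]
    funext v
    simp only [Pi.add_apply]
    by_cases hvU : v ∈ U
    · simp [hvU, dj v hvU, D']
    · by_cases hvW : v ∈ W
      · simp [hvU, hvW, D']
      · have h1 := g0supp v (by simp [hvU, hvW])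
        have h2 := hD v (by simp [hvU, hvW])
        simp [hvU, hvW, h1, h2]
  · intro e h1 h2 h3
    simp only [mem_union] at h1 h2
    simp only [Pi.add_apply] at h3 ⊢
    by_cases hc : e ∈ eb s t U W
    · have hh := mem_eb.1 hc
      have a1 := u1 e (by
        rintro ⟨a1, a2⟩
        rcases hh with ⟨_, h4⟩ | ⟨h4, _⟩
        · exact dj _ a2 h4
        · exact dj _ a1 h4)
      have a2 := w1 e (by
        rintro ⟨a1, a2⟩
        rcases hh with ⟨h4, _⟩ | ⟨_, h4⟩
        · exact dj _ h4 a1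
        · exact dj _ h4 a2)
      rw [a1, a2, add_zero, add_zero]; exact g0on e hc
    · have a0 := g0off e hc
      rw [mem_eb] at hc
      by_cases hu : s e ∈ U
      · have hu2 : t e ∈ U := by tauto
        have a2 := w1 e (fun h => dj _ hu h.1)
        have a3 : fW e = 0 := by
          by_contra h; exact dj _ hu (hW1 e h).1
        rw [a0, a2, zero_add, add_zero]
        exact u3 e hu hu2 (by simpa [a3] using h3)
      · have hw : s e ∈ W := by tauto
        have hw2 : t e ∈ W := by tauto
        have a2 := u1 e (fun h => dj _ h.1 hw)
        have a3 : fU e = 0 := by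
          by_contra h; exact dj _ (hU1 e h).1 hw
        rw [a0, a2, zero_add, zero_add]
        exact w3 e hw hw2 (by simpa [a3] using h3)

end PF

open SimpleGraph

namespace PF
set_option linter.unusedSectionVars false
open Finset Classical
universe u v
variable {V : Type u} {E : Type v} [Fintype V] [Fintype E]

def Feas (s t : E → V) (L : Finset V) (φ : E → ℤ) : Prop :=
  ∀ e, |φ e| ≤ 1 ∧ (φ e ≠ 0 → s e ∈ L ∧ t e ∈ L)

lemma augment (s t : E → V) (L : Finset V) (x y : V) (hx : x ∈ L) (k : ℕ)
    (hcut : ∀ S ⊆ L, x ∈ S → y ∉ S → k < (eb s t S (L \ S)).card)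
    (φ : E → ℤ) (hφ : Feas s t L φ)
    (hb : bd s t φ = Pi.single x (k : ℤ) - Pi.single y (k : ℤ)) :
    ∃ φ', Feas s t L φ' ∧
      bd s t φ' = Pi.single x ((k + 1 : ℕ) : ℤ) - Pi.single y ((k + 1 : ℕ) : ℤ) := by
  let P : Finset V → Prop := fun R => R ⊆ L ∧ x ∈ R ∧ ∀ v ∈ R, ∃ ψ, Feas s t L ψ ∧
    bd s t ψ = bd s t φ + Pi.single x 1 - Pi.single v 1 ∧
    ∀ e, ¬ (s e ∈ R ∧ t e ∈ R) → ψ e = φ e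
  have hP : P {x} := by
    refine ⟨by simpa using hx, by simp, ?_⟩
    intro v hv
    rw [mem_singleton] at hv; subst hv
    exact ⟨φ, hφ, by simp, fun _ _ => rfl⟩
  obtain ⟨R, hR, hmax⟩ := exists_max_image (univ.filter P) card ⟨{x}, by simpa using hP⟩
  rw [mem_filter] at hR
  obtain ⟨-, hRL, hxR, hR⟩ := hR
  by_cases hy : y ∈ R
  · obtain ⟨ψ, h1, h2, -⟩ := hR y hy
    refine ⟨ψ, h1, ?_⟩
    rw [h2, hb]
    push_cast
    rw [Pi.single_add, Pi.single_add]; abel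
  exfalso
  -- extension step
  have ext : ∀ e v v' c, v ∈ R → v' ∈ L → v' ∉ R →
      (bd s t (Pi.single e c) = Pi.single v (1:ℤ) - Pi.single v' 1) →
      ((s e = v ∧ t e = v') ∨ (s e = v' ∧ t e = v)) → |φ e + c| ≤ 1 → False := by
    intro e v v' c hv hv'L hv' hbe hev hc
    obtain ⟨ψ, h1, h2, h3⟩ := hR v hv
    have heL : s e ∈ L ∧ t e ∈ L := by
      rcases hev with ⟨h, h'⟩ | ⟨h, h'⟩ <;> rw [h, h'] <;> simp [hRL hv, hv'L]
    have heR : ¬ (s e ∈ R ∧ t e ∈ R) := by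
      rcases hev with ⟨h, h'⟩ | ⟨h, h'⟩ <;> rw [h, h'] <;> simp [hv']
    have : P (insert v' R) := by
      refine ⟨insert_subset hv'L hRL, by simp [hxR], ?_⟩
      intro z hz
      rw [mem_insert] at hz
      rcases hz with rfl | hz
      · refine ⟨ψ + Pi.single e c, ?_, ?_, ?_⟩
        · intro e'
          by_cases hee : e' = e
          · subst hee
            simp only [Pi.add_apply, Pi.single_eq_same, h3 e' heR]
            exact ⟨hc, fun _ => heL⟩
          · simpa [Pi.single_eq_of_ne hee] using h1 e'
        · rw [bd_add, h2, hbe]; abel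
        · intro e' he'
          have hee : e' ≠ e := by
            rintro rfl
            apply he'
            rcases hev with ⟨h, h'⟩ | ⟨h, h'⟩ <;> rw [h, h'] <;> simp [hv]
          have : ¬ (s e' ∈ R ∧ t e' ∈ R) := fun h => he' (by simp [h])
          simp [Pi.single_eq_of_ne hee, h3 e' this]
      · obtain ⟨ψ, h1, h2, h3⟩ := hR z hz
        refine ⟨ψ, h1, h2, fun e' he' => h3 e' fun h => he' (by simp [h])⟩
    have h5 := hmax (insert v' R) (by simpa using this)
    rw [card_insert_of_notMem hv'] at h5
    omega
  have sat1 : ∀ e, s e ∈ R → t e ∈ L → t e ∉ R → φ e = 1 := by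
    intro e h1 h2 h3
    by_contra h
    have := (abs_le.1 (hφ e).1)
    refine ext e (s e) (t e) 1 h1 h2 h3 (by rw [bd_single]) (Or.inl ⟨rfl, rfl⟩) ?_
    rw [abs_le]; omega
  have sat2 : ∀ e, t e ∈ R → s e ∈ L → s e ∉ R → φ e = -1 := by
    intro e h1 h2 h3
    by_contra h
    have := (abs_le.1 (hφ e).1)
    refine ext e (t e) (s e) (-1) h1 h2 h3 ?_ (Or.inr ⟨rfl, rfl⟩) ?_
    · rw [bd_single, Pi.single_neg, Pi.single_neg]; abel
    · rw [abs_le]; omega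
  have e1 : ∑ v ∈ R, bd s t φ v = k := by
    rw [hb]
    simp [sum_sub_distrib, Finset.sum_pi_single', hxR, hy]
  have e2 : ∑ v ∈ R, bd s t φ v = (eb s t R (L \ R)).card := by
    rw [sum_bd, card_eq_sum_ones, Nat.cast_sum, ← sum_filter_add_sum_filter_not univ (fun e => e ∈ eb s t R (L \ R))]
    have : (univ.filter fun e => e ∈ eb s t R (L \ R)) = eb s t R (L \ R) := by ext; simp
    rw [this]
    rw [sum_eq_zero (s := univ.filter fun e => e ∉ eb s t R (L \ R)), add_zero]
    · refine sum_congr rfl fun e he => ?_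
      rw [mem_eb] at he
      simp only [mem_sdiff] at he
      rcases he with ⟨h1, h2, h3⟩ | ⟨⟨h2, h3⟩, h1⟩
      · simp [h1, h3, sat1 e h1 h2 h3]
      · simp [h1, h3, sat2 e h1 h2 h3]
    · intro e he
      simp only [mem_filter, mem_eb, mem_sdiff, mem_univ, true_and] at he
      by_cases h0 : φ e = 0
      · simp [h0]
      have := (hφ e).2 h0
      by_cases h1 : s e ∈ R <;> by_cases h2 : t e ∈ R <;> simp_all
  have := hcut R hRL hxR hy
  rw [e1] at e2
  have : k = (eb s t R (L \ R)).card := by exact_mod_cast e2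
  omega

lemma closed_trail (s t : E → V) (L : Finset V) (x y : V) (hx : x ∈ L) (hy : y ∈ L)
    (hcut : ∀ S ⊆ L, S.Nonempty → S ≠ L → 2 ≤ (eb s t S (L \ S)).card) :
    ∃ W ⊆ L, x ∈ W ∧ y ∈ W ∧ ∃ f, Good s t f W := by
  by_cases hxy : x = y
  · subst hxy
    refine ⟨{x}, by simpa using hx, by simp, by simp, 0, ?_⟩
    exact good_of_span s t 0 _ (by simp) (bd_zero s t) (span_singleton s t _ x)
  have hcut' : ∀ S ⊆ L, x ∈ S → y ∉ S → 2 ≤ (eb s t S (L \ S)).card := by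
    intro S hS hxS hyS
    exact hcut S hS ⟨x, hxS⟩ (fun h => hyS (h ▸ hy))
  obtain ⟨φ1, a1, a2⟩ := augment s t L x y hx 0
    (fun S h1 h2 h3 => by have := hcut' S h1 h2 h3; omega) 0 (by intro e; simp) (by
      rw [bd_zero]; simp)
  obtain ⟨φ, hφ, hb⟩ := augment s t L x y hx 1
    (fun S h1 h2 h3 => by have := hcut' S h1 h2 h3; omega) φ1 a1 (by simpa using a2)
  let P : Finset V → Prop := fun W => W ⊆ L ∧ x ∈ W ∧
    Span s t {e | φ e ≠ 0 ∧ s e ∈ W ∧ t e ∈ W} W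
  have hP : P {x} := ⟨by simpa using hx, by simp, span_singleton _ _ _ _⟩
  obtain ⟨W, hW, hmax⟩ := exists_max_image (univ.filter P) card ⟨{x}, by simpa using hP⟩
  rw [mem_filter] at hW
  obtain ⟨-, hWL, hxW, hW⟩ := hW
  have ext : ∀ e v v', v ∈ W → v' ∉ W → φ e ≠ 0 →
      ((s e = v ∧ t e = v') ∨ (s e = v' ∧ t e = v)) → False := by
    intro e v v' hv hv' he hev
    have hL := (hφ e).2 he
    have : P (insert v' W) := by
      refine ⟨insert_subset ?_ hWL, by simp [hxW], ?_⟩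
      · rcases hev with ⟨h, h'⟩ | ⟨h, h'⟩ <;> rw [h, h'] at hL <;> tauto
      · intro D h1 h2
        obtain ⟨g, g1, g2⟩ := span_insert s t _ W e v v' hev hv hv' hW D h1 h2
        refine ⟨g, fun e' he' => g1 e' fun hin => he' ?_, g2⟩
        rcases hin with rfl | hin
        · refine ⟨he, ?_⟩
          rcases hev with ⟨h, h'⟩ | ⟨h, h'⟩ <;> rw [h, h'] <;> simp [hv]
        · obtain ⟨i1, i2, i3⟩ := hin
          exact ⟨i1, by simp [i2], by simp [i3]⟩
    have h5 := hmax (insert v' W) (by simpa using this)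
    rw [card_insert_of_notMem hv'] at h5
    omega
  have iff : ∀ e, φ e ≠ 0 → (s e ∈ W ↔ t e ∈ W) := by
    intro e he
    constructor
    · intro h; by_contra h'; exact ext e _ _ h h' he (Or.inl ⟨rfl, rfl⟩)
    · intro h; by_contra h'; exact ext e _ _ h h' he (Or.inr ⟨rfl, rfl⟩)
  have hyW : y ∈ W := by
    by_contra hyW
    have e1 : ∑ v ∈ W, bd s t φ v = 2 := by
      rw [hb]
      simp [sum_sub_distrib, Finset.sum_pi_single', hxW, hyW]
    rw [sum_bd, sum_eq_zero] at e1
    · norm_num at e1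
    · intro e _
      by_cases he : φ e = 0
      · simp [he]
      · simp [iff e he]
  refine ⟨W, hWL, hxW, hyW, fun e => if s e ∈ W then (φ e : ZMod 2) else 0, ?_⟩
  have hne : ∀ e, (φ e : ZMod 2) ≠ 0 ↔ φ e ≠ 0 := by
    intro e
    have := abs_le.1 (hφ e).1
    have h3 : φ e = -1 ∨ φ e = 0 ∨ φ e = 1 := by omega
    rcases h3 with h | h | h <;> rw [h] <;> decide
  apply good_of_span
  · intro e he
    by_cases h : s e ∈ W
    · simp only [h, if_true] at he
      exact ⟨h, (iff e ((hne e).1 he)).1 h⟩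
    · simp [h] at he
  · funext v
    by_cases hv : v ∈ W
    · have h1 : bd s t (fun e => if s e ∈ W then (φ e : ZMod 2) else 0) v = ((bd s t φ v : ℤ) : ZMod 2) := by
        unfold bd
        push_cast
        refine sum_congr rfl fun e _ => ?_
        by_cases he : φ e = 0
        · simp [he]
        · by_cases h : s e ∈ W
          · simp [h]
          · have h' : t e ∉ W := fun h' => h ((iff e he).2 h')
            have n1 : s e ≠ v := fun q => h (q ▸ hv)
            have n2 : t e ≠ v := fun q => h' (q ▸ hv)
            simp [n1, n2]
      rw [h1, hb]
      simp only [Pi.sub_apply, Pi.single_apply, Pi.zero_apply]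
      split_ifs <;> decide
    · refine bd_supp s t _ W ?_ v hv
      intro e he
      by_cases h : s e ∈ W
      · have : φ e = 0 := by
          by_contra h0; exact he ⟨h, (iff e h0).1 h⟩
        simp [this]
      · simp [h]
  · intro D h1 h2
    obtain ⟨g, g1, g2⟩ := hW D h1 h2
    refine ⟨g, fun e he => g1 e fun hin => he ?_, g2⟩
    simp only [Set.mem_ofPred_eq, hin.2.1, if_true]
    exact (hne e).2 hin.1

lemma eb_union (s t : E → V) (A B C : Finset V) (hBC : Disjoint B C) (hAB : Disjoint A B)
    (hAC : Disjoint A C) :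
    (eb s t A (B ∪ C)).card = (eb s t A B).card + (eb s t A C).card := by
  have : eb s t A (B ∪ C) = eb s t A B ∪ eb s t A C := by
    ext e; simp only [mem_eb, mem_union]; tauto
  rw [this]
  apply card_union_of_disjoint
  rw [Finset.disjoint_left] at hBC hAB hAC ⊢
  intro e h1 h2
  rw [mem_eb] at h1 h2
  have := @hBC (s e); have := @hBC (t e); have := @hAB (s e); have := @hAB (t e)
  have := @hAC (s e); have := @hAC (t e)
  tauto

lemma eb_union_left (s t : E → V) (A B C : Finset V) (hBC : Disjoint B C) (hAB : Disjoint A B)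
    (hAC : Disjoint A C) :
    (eb s t (B ∪ C) A).card = (eb s t B A).card + (eb s t C A).card := by
  rw [eb_comm, eb_union s t A B C hBC hAB hAC, eb_comm s t A B, eb_comm s t A C]

/-- end-block of the complement of U -/
lemma end_block (s t : E → V) (U : Finset V) (hU : U ≠ univ) :
    ∃ L : Finset V, L.Nonempty ∧ Disjoint U L ∧ (eb s t L (Uᶜ \ L)).card ≤ 1 ∧
      ∀ S ⊆ L, S.Nonempty → S ≠ L → 2 ≤ (eb s t S (L \ S)).card := by
  let P : Finset V → Prop := fun L => L.Nonempty ∧ L ⊆ Uᶜ ∧ (eb s t L (Uᶜ \ L)).card ≤ 1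
  have hP : P Uᶜ := by
    refine ⟨?_, subset_rfl, ?_⟩
    · rw [nonempty_iff_ne_empty]; simpa using hU
    · have : eb s t Uᶜ (Uᶜ \ Uᶜ) = ∅ := by ext e; simp [mem_eb]
      rw [this]; simp
  obtain ⟨L, hL, hmin⟩ := exists_min_image (univ.filter P) card ⟨Uᶜ, by simpa using hP⟩
  rw [mem_filter] at hL
  obtain ⟨-, hne, hLU, hL1⟩ := hL
  refine ⟨L, hne, ?_, hL1, ?_⟩
  · rw [Finset.disjoint_left]; intro v hv hv'; exact (mem_compl.1 (hLU hv')) hv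
  have key : ∀ S ⊆ L, S.Nonempty → S ≠ L →
      2 ≤ (eb s t S (L \ S)).card + (eb s t S (Uᶜ \ L)).card := by
    intro S hS hSn hSL
    by_contra hlt
    rw [← eb_union] at hlt
    · have heq : L \ S ∪ Uᶜ \ L = Uᶜ \ S := by
        ext v; simp only [mem_union, mem_sdiff]
        have := @hS v; have := @hLU v; tauto
      rw [heq] at hlt
      have := hmin S (by
        rw [mem_filter]; exact ⟨mem_univ _, hSn, hS.trans hLU, by omega⟩)
      have := card_lt_card (hS.ssubset_of_ne hSL)
      omega
    · rw [Finset.disjoint_left]; intro v; simp only [mem_sdiff]; tauto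
    · rw [Finset.disjoint_left]; intro v; simp only [mem_sdiff]; tauto
    · rw [Finset.disjoint_left]; intro v; simp only [mem_sdiff]; have := @hS v; tauto
  intro S hS hSn hSL
  by_contra hlt
  have k1 := key S hS hSn hSL
  have k2 := key (L \ S) sdiff_subset (by
    rw [nonempty_iff_ne_empty]; intro h
    rw [sdiff_eq_empty_iff_subset] at h
    exact hSL (subset_antisymm hS h)) (by
    intro h
    obtain ⟨v, hv⟩ := hSn
    have := hS hv
    rw [← h] at this
    simp [hv] at this)
  have : L \ (L \ S) = S := by simp [hS]
  rw [this, eb_comm s t (L \ S) S] at k2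
  have h3 := eb_union_left s t (Uᶜ \ L) S (L \ S) (by
      rw [Finset.disjoint_left]; intro v; simp only [mem_sdiff]; tauto) (by
      rw [Finset.disjoint_left]; intro v; simp only [mem_sdiff]; have := @hS v; tauto) (by
      rw [Finset.disjoint_left]; intro v; simp only [mem_sdiff]; tauto)
  have h4 : S ∪ L \ S = L := by simp [hS]
  rw [h4] at h3
  omega

lemma Good.toR {s t : E → V} {f : E → ZMod 2} {U : Finset V} (h : Good s t f U) (u : V) :
    GoodR s t False u f U :=
  ⟨h.1, h.2.1, fun D h1 h2 _ => h.2.2 D h1 h2⟩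

lemma cross_block (s t : E → V) (U L : Finset V) (hUL : Disjoint U L) :
    (cross s t L).card = (eb s t L U).card + (eb s t L (Uᶜ \ L)).card := by
  rw [cross, ← eb_union]
  · congr 2
    ext v; simp only [mem_compl, mem_union, mem_sdiff]
    have h := Finset.disjoint_left.1 hUL
    have := @h v; tauto
  · rw [Finset.disjoint_left]; intro v; simp only [mem_sdiff, mem_compl]; tauto
  · exact hUL.symm
  · rw [Finset.disjoint_left]; intro v; simp only [mem_sdiff]; tauto

def H3 (s t : E → V) : Prop :=
  ∀ S : Finset V, S.Nonempty → S ≠ univ → 3 ≤ (cross s t S).card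

lemma grow (s t : E → V) (h3 : H3 s t) (f : E → ZMod 2) (U : Finset V) (hUn : U.Nonempty)
    (hU : U ≠ univ) (hg : Good s t f U) :
    ∃ f' U', U ⊂ U' ∧ Good s t f' U' ∧ ∀ e, (s e ∈ U ∨ t e ∈ U) → f' e = f e := by
  obtain ⟨L, hL, hUL, hL1, hL2⟩ := end_block s t U hU
  have dj := Finset.disjoint_left.1 hUL
  have h := h3 L hL (by
    rintro rfl
    obtain ⟨v, hv⟩ := hUn
    exact dj hv (mem_univ v))
  rw [cross_block s t U L hUL] at h
  have h2 : 1 < (eb s t L U).card := by omega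
  obtain ⟨p, hp, q, hq, hpq⟩ := one_lt_card.1 h2
  have ends : ∀ e, e ∈ eb s t L U → ∃ x ∈ L, ∀ W : Finset V, x ∈ W → e ∈ eb s t U W := by
    intro e he
    rcases mem_eb.1 he with ⟨h1, h2⟩ | ⟨h1, h2⟩
    · exact ⟨s e, h1, fun W hW => mem_eb.2 (Or.inr ⟨hW, h2⟩)⟩
    · exact ⟨t e, h2, fun W hW => mem_eb.2 (Or.inl ⟨h1, hW⟩)⟩
  obtain ⟨x, hx, hxp⟩ := ends p hp
  obtain ⟨y, hy, hyq⟩ := ends q hq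
  obtain ⟨W, hWL, hxW, hyW, fW, hfW⟩ := closed_trail s t L x y hx hy hL2
  have hUW : Disjoint U W := disjoint_of_subset_right hWL hUL
  refine ⟨f + fW, U ∪ W, ?_, merge s t False x f fW U W hUW (hg.toR x) hfW p q hpq
    (hxp W hxW) (hyq W hyW) (fun h => h.elim), ?_⟩
  · refine ⟨subset_union_left, fun h => ?_⟩
    exact dj (h (mem_union_right _ hxW)) hx
  · intro e he
    have : fW e = 0 := by
      by_contra h0
      have h1 := hfW.1 e h0
      rcases he with he | he
      · exact dj he (hWL h1.1)
      · exact dj he (hWL h1.2)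
    simp [this]

lemma grow_all (s t : E → V) (h3 : H3 s t) (f : E → ZMod 2) (U : Finset V) (hUn : U.Nonempty)
    (hg : Good s t f U) :
    ∃ f', Good s t f' univ ∧ ∀ e, (s e ∈ U ∨ t e ∈ U) → f' e = f e := by
  induction hn : (Uᶜ).card using Nat.strong_induction_on generalizing U f with
  | _ n ih =>
  by_cases hU : U = univ
  · subst hU; exact ⟨f, hg, fun _ _ => rfl⟩
  obtain ⟨f', U', hlt, hg', hf'⟩ := grow s t h3 f U hUn hU hg
  obtain ⟨f'', hg'', hf''⟩ := ih _ (by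
    rw [← hn]; exact card_lt_card (compl_ssubset_compl.2 hlt)) f' U' (hUn.mono hlt.1) hg' rfl
  refine ⟨f'', hg'', fun e he => ?_⟩
  rw [hf'' e (he.imp (fun h => hlt.1 h) (fun h => hlt.1 h)), hf' e he]

end PF

open SimpleGraph

namespace PF
set_option linter.unusedSectionVars false
set_option maxRecDepth 20000 in
lemma three_vals4 : ∀ x y z k : ZMod 2 × ZMod 2, ¬ (x ≠ 0 ∧ y ≠ 0 ∧ z ≠ 0 ∧ k ≠ 0 ∧ x + y + z = 0 ∧
    ¬ (x = k ∨ y = k ∨ z = k)) := by decide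

open Finset Classical
universe u v
variable {V : Type u} {E : Type v} [Fintype V] [Fintype E]

abbrev K8 := ZMod 2 × ZMod 2 × ZMod 2

lemma K8_two (a : K8) : a + a = 0 := by revert a; decide

lemma bd_pair (s t : E → V) (f : E → ZMod 2) (g : E → K4) (v : V) :
    bd s t (fun e => ((f e, g e) : K8)) v = (bd s t f v, bd s t g v) := by
  unfold bd
  have h1 := Prod.fst_sum (s := univ) (f := fun e => ((if s e = v then ((f e, g e) : K8) else 0) - (if t e = v then (f e, g e) else 0)))
  have h2 := Prod.snd_sum (s := univ) (f := fun e => ((if s e = v then ((f e, g e) : K8) else 0) - (if t e = v then (f e, g e) else 0)))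
  refine Prod.ext (h1.trans ?_) (h2.trans ?_)
  · refine sum_congr rfl fun e _ => ?_
    split_ifs <;> simp
  · refine sum_congr rfl fun e _ => ?_
    split_ifs <;> simp

lemma flow_of_good (s t : E → V) (f : E → ZMod 2) (h : Good s t f univ) :
    ∃ θ : E → K8, (∀ e, θ e ≠ 0) ∧ bd s t θ = 0 ∧ ∀ e, (θ e).1 = f e := by
  obtain ⟨g, -, g2, g3⟩ := h.2.2 0 (by simp) (by simp)
  refine ⟨fun e => (f e, g e), ?_, ?_, fun _ => rfl⟩
  · intro e he
    have h1 : f e = 0 := congrArg Prod.fst he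
    have h2 : g e = 0 := congrArg Prod.snd he
    exact g3 e (mem_univ _) (mem_univ _) h1 h2
  · funext v
    rw [bd_pair, h.2.1, g2]; rfl

lemma base_plain (s t : E → V) (h3 : H3 s t) :
    ∃ θ : E → K8, (∀ e, θ e ≠ 0) ∧ bd s t θ = 0 := by
  rcases isEmpty_or_nonempty V with hV | ⟨⟨v⟩⟩
  · exact ⟨0, fun e => (hV.false (s e)).elim, bd_zero s t⟩
  obtain ⟨f, hf, -⟩ := grow_all s t h3 0 {v} ⟨v, by simp⟩
    (good_of_span s t 0 _ (by simp) (bd_zero s t) (span_singleton s t _ v))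
  obtain ⟨θ, h1, h2, -⟩ := flow_of_good s t f hf
  exact ⟨θ, h1, h2⟩

lemma goodR_pair (s t : E → V) (u w : V) (huw : u ≠ w) (e0 : E)
    (he0 : eb s t {u} {w} = {e0}) : GoodR s t True u 0 {u, w} := by
  refine ⟨by simp, bd_zero s t, fun D hD hsum hDu => ?_⟩
  have hDu := hDu trivial
  have hsum' : D u + D w = 0 := by
    rw [← sum_pair huw, ← hsum]
    exact sum_subset (subset_univ _) (fun v _ hv => hD v hv)
  have hw : D w = D u := by
    have := neg_eq_of_add_eq_zero_right hsum'
    rw [K_neg] at this; exact this.symm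
  have h0 : (s e0 = u ∧ t e0 = w) ∨ (s e0 = w ∧ t e0 = u) := by
    have : e0 ∈ eb s t {u} {w} := by simp [he0]
    simpa [mem_eb] using this
  let l : E → K4 := fun e => if s e = t e ∧ (s e = u ∨ s e = w) then (1, 0) else 0
  have hl : bd s t l = 0 := by
    funext v
    unfold bd
    refine sum_eq_zero fun e _ => ?_
    by_cases h : s e = t e
    · rw [h]; simp
    · simp [l, h]
  have hb : bd s t (Pi.single e0 (D u)) = D := by
    rw [bd_single]
    have hn : ∀ z : V, -(Pi.single z (D u) : V → K4) = Pi.single z (D u) := by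
      intro z; rw [← Pi.single_neg, K_neg]
    have : (Pi.single (s e0) (D u) - Pi.single (t e0) (D u) : V → K4) =
        Pi.single u (D u) + Pi.single w (D u) := by
      rcases h0 with ⟨h1, h2⟩ | ⟨h1, h2⟩ <;> rw [h1, h2, sub_eq_add_neg, hn]
      rw [add_comm]
    rw [this]
    funext v
    by_cases h1 : v = u
    · subst h1; simp [Pi.single_eq_of_ne huw]
    by_cases h2 : v = w
    · subst h2; simp [Pi.single_eq_of_ne huw.symm, hw]
    simp [Pi.single_eq_of_ne h1, Pi.single_eq_of_ne h2, hD v (by simp [h1, h2])]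
  have hle0 : l e0 = 0 := by
    have : s e0 ≠ t e0 := by
      rcases h0 with ⟨h1, h2⟩ | ⟨h1, h2⟩ <;> rw [h1, h2]
      · exact huw
      · exact huw.symm
    simp [l, this]
  refine ⟨l + Pi.single e0 (D u), ?_, ?_, ?_⟩
  · intro e he
    have h1 : e ≠ e0 := by
      rintro rfl
      apply he
      rcases h0 with ⟨h1, h2⟩ | ⟨h1, h2⟩ <;> rw [h1, h2] <;> simp
    have h2 : l e = 0 := by
      simp only [l]; rw [if_neg]
      rintro ⟨a, b⟩
      apply he
      rw [← a]; simpa using b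
    simp [h2, Pi.single_eq_of_ne h1]
  · rw [bd_add, hl, hb, zero_add]
  · intro e h1 h2 _
    by_cases h : e = e0
    · subst h; simpa [hle0] using hDu
    · have h3 : e ∉ eb s t {u} {w} := by simp [he0, h]
      simp only [mem_eb, mem_singleton, mem_insert] at h1 h2 h3
      have h4 : s e = t e := by
        rcases h1 with h1 | h1 <;> rcases h2 with h2 | h2
        · rw [h1, h2]
        · exact absurd (Or.inl ⟨h1, h2⟩) h3
        · exact absurd (Or.inr ⟨h1, h2⟩) h3
        · rw [h1, h2]
      have : l e = (1, 0) := by simp only [l]; rw [if_pos ⟨h4, h1⟩]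
      simp [this, Pi.single_eq_of_ne h]

def Poor (s t : E → V) (u w : V) (θ : E → K8) : Prop :=
  ∀ a ∈ cross s t {u}, ∃ c ∈ cross s t {w}, θ c = θ a

lemma three_vals (x y z k : K8) (hx : x ≠ 0) (hy : y ≠ 0) (hz : z ≠ 0) (hk : k ≠ 0)
    (h : x + y + z = 0) (x1 : x.1 = 0) (y1 : y.1 = 0) (z1 : z.1 = 0) (k1 : k.1 = 0) :
    x = k ∨ y = k ∨ z = k := by
  have nz : ∀ a : K8, a ≠ 0 → a.1 = 0 → a.2 ≠ 0 := fun a h0 h1 h2 => h0 (Prod.ext h1 h2)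
  have := not_not.1 fun hn => three_vals4 x.2 y.2 z.2 k.2 ⟨nz x hx x1, nz y hy y1, nz z hz z1,
    nz k hk k1, congrArg Prod.snd h, hn⟩
  rcases this with h | h | h
  · exact Or.inl (Prod.ext (x1.trans k1.symm) h)
  · exact Or.inr (Or.inl (Prod.ext (y1.trans k1.symm) h))
  · exact Or.inr (Or.inr (Prod.ext (z1.trans k1.symm) h))

lemma sum_star (s t : E → V) (θ : E → K8) (hθ : bd s t θ = 0) (S : Finset V) :
    ∑ e ∈ cross s t S, θ e = 0 := by
  rw [← sum_bd_two K8_two, hθ]; simp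

/-- degree splitting -/
lemma deg_split (s t : E → V) (u : V) (A B : Finset V) (hA : u ∉ A) (hB : u ∉ B)
    (hAB : Disjoint A B) : (eb s t {u} A).card + (eb s t {u} B).card ≤ (cross s t {u}).card := by
  rw [← eb_union s t {u} A B hAB (by simpa using hA) (by simpa using hB)]
  apply card_le_card
  intro e he
  simp only [mem_eb, mem_cross, mem_union, mem_singleton] at he ⊢
  rcases he with ⟨h1, h2⟩ | ⟨h1, h2⟩
  · left; refine ⟨h1, fun h => ?_⟩; rw [h] at h2; tauto
  · right; refine ⟨fun h => ?_, h2⟩; rw [h] at h1; tauto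

lemma touch (s t : E → V) (h3 : H3 s t) (u w : V) (huw : u ≠ w)
    (hu : (cross s t {u}).card = 3) (L : Finset V) (hL : L.Nonempty) (hUL : Disjoint {u, w} L)
    (hL1 : (eb s t L (({u, w} : Finset V)ᶜ \ L)).card ≤ 1) : (eb s t {w} L).Nonempty := by
  have huL : u ∉ L := fun h => Finset.disjoint_left.1 hUL (by simp) h
  have hwL : w ∉ L := fun h => Finset.disjoint_left.1 hUL (by simp) h
  rw [nonempty_iff_ne_empty]
  intro hempty
  have c1 := h3 L hL (by rintro rfl; simp at huL)
  rw [cross_block s t _ L hUL] at c1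
  have c2 := h3 ({u} ∪ L) ⟨u, by simp⟩ (by
    intro h
    have : w ∈ ({u} ∪ L : Finset V) := by rw [h]; simp
    simp [hwL, huw.symm] at this)
  have e1 : eb s t L {u, w} = eb s t {u} L := by
    have : ({u, w} : Finset V) = {u} ∪ {w} := rfl
    ext e
    have h := congrArg (fun X => e ∈ X) hempty
    simp only [mem_eb, mem_singleton, mem_insert, notMem_empty, eq_iff_iff, iff_false] at h ⊢
    tauto
  rw [e1] at c1
  have c3 : (cross s t ({u} ∪ L)).card ≤ (eb s t {u} ({u} ∪ L)ᶜ).card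
      + (eb s t L (({u, w} : Finset V)ᶜ \ L)).card := by
    rw [cross, eb_union_left]
    · have : eb s t L ({u} ∪ L)ᶜ ⊆ eb s t L (({u, w} : Finset V)ᶜ \ L) := by
        intro e he
        have h := congrArg (fun X => e ∈ X) hempty
        simp only [mem_eb, mem_singleton, mem_insert, notMem_empty, eq_iff_iff, iff_false,
          mem_sdiff, mem_compl, mem_union] at h he ⊢
        tauto
      have := card_le_card this
      omega
    · simpa using huL
    · rw [Finset.disjoint_left]; intro v; simp only [mem_compl, mem_union]; tauto
    · rw [Finset.disjoint_left]; intro v; simp only [mem_compl, mem_union]; tauto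
  have c4 := deg_split s t u L ({u} ∪ L)ᶜ huL (by simp) (by
    rw [Finset.disjoint_left]; intro v; simp only [mem_compl, mem_union]; tauto)
  omega

lemma base_poor (s t : E → V) (h3 : H3 s t) (u w : V) (huw : u ≠ w)
    (hu : (cross s t {u}).card = 3) (hw : (cross s t {w}).card = 3)
    (he : (eb s t {u} {w}).card = 1) :
    ∃ θ : E → K8, (∀ e, θ e ≠ 0) ∧ bd s t θ = 0 ∧ Poor s t u w θ := by
  obtain ⟨e0, he0⟩ := card_eq_one.1 he
  have hne : ({u, w} : Finset V) ≠ univ := by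
    intro h
    have : cross s t {u} = eb s t {u} {w} := by
      ext e
      have h1 : s e ∈ ({u, w} : Finset V) := by rw [h]; simp
      have h2 : t e ∈ ({u, w} : Finset V) := by rw [h]; simp
      simp only [mem_cross, mem_eb, mem_singleton, mem_insert] at *
      have := huw.symm
      have : s e = w → s e ≠ u := fun a => a ▸ this
      have : t e = w → t e ≠ u := fun a => a ▸ huw.symm
      tauto
    rw [this] at hu; omega
  obtain ⟨L, hL, hUL, hL1, hL2⟩ := end_block s t {u, w} hne
  obtain ⟨q, hq⟩ := touch s t h3 u w huw hu L hL hUL hL1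
  obtain ⟨p, hp⟩ := touch s t h3 w u huw.symm hw L hL (by rwa [pair_comm]) (by rwa [pair_comm])
  have huL : u ∉ L := fun h => Finset.disjoint_left.1 hUL (by simp) h
  have hwL : w ∉ L := fun h => Finset.disjoint_left.1 hUL (by simp) h
  have ends : ∀ e z, e ∈ eb s t {z} L → z ∈ ({u, w} : Finset V) →
      ∃ x ∈ L, ∀ W : Finset V, x ∈ W → e ∈ eb s t {u, w} W := by
    intro e z he hz
    rcases mem_eb.1 he with ⟨h1, h2⟩ | ⟨h1, h2⟩
    · rw [mem_singleton] at h1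
      exact ⟨t e, h2, fun W hW => mem_eb.2 (Or.inl ⟨h1 ▸ hz, hW⟩)⟩
    · rw [mem_singleton] at h2
      exact ⟨s e, h1, fun W hW => mem_eb.2 (Or.inr ⟨hW, h2 ▸ hz⟩)⟩
  obtain ⟨x, hx, hxp⟩ := ends p u hp (by simp)
  obtain ⟨y, hy, hyq⟩ := ends q w hq (by simp)
  obtain ⟨W, hWL, hxW, hyW, fW, hfW⟩ := closed_trail s t L x y hx hy hL2
  have hUW : Disjoint {u, w} W := disjoint_of_subset_right hWL hUL
  have hqu : s q ≠ u ∧ t q ≠ u := by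
    rcases mem_eb.1 hq with ⟨h1, h2⟩ | ⟨h1, h2⟩
    · rw [mem_singleton] at h1
      exact ⟨h1 ▸ huw.symm, fun h => huL (h ▸ h2)⟩
    · rw [mem_singleton] at h2
      exact ⟨fun h => huL (h ▸ h1), h2 ▸ huw.symm⟩
  have hpu : s p = u ∨ t p = u := by
    rcases mem_eb.1 hp with ⟨h1, h2⟩ | ⟨h1, h2⟩
    · exact Or.inl (mem_singleton.1 h1)
    · exact Or.inr (mem_singleton.1 h2)
  have hpq : p ≠ q := by rintro rfl; tauto
  have hg := merge s t True u 0 fW {u, w} W hUW (goodR_pair s t u w huw e0 he0) hfW p q hpq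
    (hxp W hxW) (hyq W hyW) (fun _ => ⟨by simp, hpu, hqu⟩)
  obtain ⟨f, hf, hff⟩ := grow_all s t h3 _ _ ⟨u, by simp⟩ hg
  obtain ⟨θ, t1, t2, t3⟩ := flow_of_good s t f hf
  have hz : ∀ z ∈ ({u, w} : Finset V), ∀ e ∈ cross s t {z}, (θ e).1 = 0 := by
    intro z hz e he
    have hs : s e = z ∨ t e = z := by
      simp only [mem_cross, mem_singleton] at he; tauto
    rw [t3, hff e]
    · simp only [Pi.add_apply, Pi.zero_apply, zero_add]
      by_contra h0
      have := hfW.1 e h0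
      rcases hs with hs | hs
      · exact Finset.disjoint_left.1 hUW hz (hs ▸ this.1)
      · exact Finset.disjoint_left.1 hUW hz (hs ▸ this.2)
    · rcases hs with hs | hs <;> rw [hs]
      · exact Or.inl (mem_union_left _ hz)
      · exact Or.inr (mem_union_left _ hz)
  refine ⟨θ, t1, t2, fun a ha => ?_⟩
  have hsum := sum_star s t θ t2 {w}
  have hzw := hz w (by simp)
  have hza := hz u (by simp) a ha
  obtain ⟨c1, c2, c3, n1, n2, n3, hc⟩ := card_eq_three.1 hw
  rw [hc] at hsum hzw ⊢
  rw [sum_insert (by simp [n1, n2]), sum_pair n3, ← add_assoc] at hsum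
  rcases three_vals _ _ _ (θ a) (t1 c1) (t1 c2) (t1 c3) (t1 a) hsum (hzw c1 (by simp))
    (hzw c2 (by simp)) (hzw c3 (by simp)) hza with h | h | h
  · exact ⟨c1, by simp, h⟩
  · exact ⟨c2, by simp, h⟩
  · exact ⟨c3, by simp, h⟩

/-- contraction map -/
noncomputable def pr (x y : V) (hxy : x ≠ y) (v : V) : {v : V // v ≠ y} :=
  if h : v = y then ⟨x, hxy⟩ else ⟨v, h⟩

lemma pr_eq (x y : V) (hxy : x ≠ y) (v z : V) (hz : z ≠ y) (hzx : z ≠ x) :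
    pr x y hxy v = ⟨z, hz⟩ ↔ v = z := by
  unfold pr
  split_ifs with h
  · simp only [Subtype.mk.injEq]
    constructor
    · intro h'; exact absurd h'.symm hzx
    · intro h'; exact absurd (h'.symm.trans h) hz
  · simp

lemma cross_pr (x y : V) (hxy : x ≠ y) (s t : E → V) (S : Finset {v : V // v ≠ y}) :
    cross (pr x y hxy ∘ s) (pr x y hxy ∘ t) S =
      cross s t (univ.filter fun v => pr x y hxy v ∈ S) := by
  ext e; simp [mem_cross]

lemma lift_contr (s t : E → V) (x y : V) (hxy : x ≠ y) (S : Finset V) (hx : x ∈ S) (hy : y ∉ S)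
    (θ : E → K8) (h0 : ∀ e, θ e ≠ 0) (hb : bd (pr x y hxy ∘ s) (pr x y hxy ∘ t) θ = 0)
    (hc : cross s t S = ∅ ∨ ∃ p q, p ≠ q ∧ cross s t S = {p, q} ∧
      ((s p = x ∧ t p = y) ∨ (s p = y ∧ t p = x))) :
    ∃ θ' : E → K8, (∀ e, θ' e ≠ 0) ∧ bd s t θ' = 0 ∧
      ∀ e, ((s e ≠ x ∧ s e ≠ y) ∨ (t e ≠ x ∧ t e ≠ y)) → θ' e = θ e := by
  have h1 : ∀ v, v ≠ x → v ≠ y → bd s t θ v = 0 := by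
    intro v hvx hvy
    have := congrFun hb ⟨v, hvy⟩
    simp only [bd, Function.comp, pr_eq x y hxy _ v hvy hvx] at this
    exact this
  have fin : ∀ θ' : E → K8, (∀ v, v ≠ x → v ≠ y → bd s t θ' v = 0) →
      ∑ e ∈ cross s t S, θ' e = 0 → bd s t θ' = 0 := by
    intro θ' h h'
    rw [← sum_bd_two K8_two, sum_eq_single_of_mem x hx] at h'
    · have hu := sum_bd_univ s t θ'
      have hyy : bd s t θ' y = 0 := by
        rw [sum_eq_single_of_mem y (mem_univ _)] at hu
        · exact hu
        · intro b _ hby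
          by_cases hbx : b = x
          · rw [hbx, h']
          · exact h b hbx hby
      funext v
      by_cases hvx : v = x
      · rw [hvx, h']; rfl
      by_cases hvy : v = y
      · rw [hvy, hyy]; rfl
      exact h v hvx hvy
    · intro b hbS hbx
      exact h b hbx (fun q => hy (q ▸ hbS))
  rcases hc with hc | ⟨p, q, hpq, hc, hp⟩
  · exact ⟨θ, h0, fin θ h1 (by simp [hc]), fun _ _ => rfl⟩
  · refine ⟨Function.update θ p (θ q), ?_, fin _ ?_ ?_, ?_⟩
    · intro e
      by_cases h : e = p
      · subst h; simpa using h0 q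
      · simpa [Function.update_of_ne h] using h0 e
    · intro v hvx hvy
      rw [← h1 v hvx hvy]
      unfold bd
      refine sum_congr rfl fun e _ => ?_
      by_cases h : e = p
      · subst h
        have a1 : s e ≠ v := by rintro rfl; tauto
        have a2 : t e ≠ v := by rintro rfl; tauto
        simp [a1, a2]
      · simp [Function.update_of_ne h]
    · rw [hc, sum_pair hpq]
      simp [Function.update_of_ne hpq.symm, K8_two]
    · intro e he
      have : e ≠ p := by rintro rfl; tauto
      simp [Function.update_of_ne this]

lemma not_H3 (s t : E → V) (h1 : ∀ S, (cross s t S).card ≠ 1) (h : ¬ H3 s t) :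
    ∃ S : Finset V, S.Nonempty ∧ S ≠ univ ∧
      (cross s t S = ∅ ∨ ∃ p q, p ≠ q ∧ cross s t S = {p, q}) := by
  unfold H3 at h
  push Not at h
  obtain ⟨S, a, b, c⟩ := h
  refine ⟨S, a, b, ?_⟩
  have := h1 S
  have h4 : (cross s t S).card = 0 ∨ (cross s t S).card = 2 := by omega
  rcases h4 with h4 | h4
  · exact Or.inl (card_eq_zero.1 h4)
  · exact Or.inr (card_eq_two.1 h4)

lemma card_contr (y : V) : Fintype.card {v : V // v ≠ y} < Fintype.card V :=
  Fintype.card_subtype_lt (x := y) (by simp)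

lemma ends_of_cross (s t : E → V) (S : Finset V) (p : E) (h : p ∈ cross s t S) :
    ∃ x y, x ∈ S ∧ y ∉ S ∧ ((s p = x ∧ t p = y) ∨ (s p = y ∧ t p = x)) := by
  rcases mem_cross.1 h with ⟨a, b⟩ | ⟨a, b⟩
  · exact ⟨s p, t p, a, b, Or.inl ⟨rfl, rfl⟩⟩
  · exact ⟨t p, s p, b, a, Or.inr ⟨rfl, rfl⟩⟩

theorem flow8 (n : ℕ) : ∀ (V : Type u) [Fintype V] (s t : E → V), Fintype.card V = n →
    (∀ S, (cross s t S).card ≠ 1) → ∃ θ : E → K8, (∀ e, θ e ≠ 0) ∧ bd s t θ = 0 := by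
  induction n using Nat.strong_induction_on with
  | _ n ih =>
  intro V _ s t hn h1
  by_cases h3 : H3 s t
  · exact base_plain s t h3
  obtain ⟨S, hS, hS', hc⟩ := not_H3 s t h1 h3
  have : ∃ x y, x ∈ S ∧ y ∉ S ∧ (cross s t S = ∅ ∨ ∃ p q, p ≠ q ∧ cross s t S = {p, q} ∧
      ((s p = x ∧ t p = y) ∨ (s p = y ∧ t p = x))) := by
    rcases hc with hc | ⟨p, q, hpq, hc⟩
    · obtain ⟨x, hx⟩ := hS
      obtain ⟨y, hy⟩ : ∃ y, y ∉ S := by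
        by_contra h; push Not at h; exact hS' (eq_univ_iff_forall.2 h)
      exact ⟨x, y, hx, hy, Or.inl hc⟩
    · obtain ⟨x, y, hx, hy, h⟩ := ends_of_cross s t S p (by simp [hc])
      exact ⟨x, y, hx, hy, Or.inr ⟨p, q, hpq, hc, h⟩⟩
  obtain ⟨x, y, hx, hy, hc⟩ := this
  have hxy : x ≠ y := fun h => hy (h ▸ hx)
  obtain ⟨θ, a, b⟩ := ih _ (hn ▸ card_contr y) {v : V // v ≠ y} (pr x y hxy ∘ s) (pr x y hxy ∘ t)
    rfl (fun S' => by rw [cross_pr]; exact h1 _)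
  obtain ⟨θ', a', b', -⟩ := lift_contr s t x y hxy S hx hy θ a b hc
  exact ⟨θ', a', b'⟩

lemma not_both (s t : E → V) (h1 : ∀ S, (cross s t S).card ≠ 1) (S : Finset V) (p q : E)
    (hpq : p ≠ q) (hc : cross s t S = {p, q}) (u : V) (hu : (cross s t {u}).card = 3)
    (hp : p ∈ cross s t {u}) (hq : q ∈ cross s t {u}) : False := by
  wlog huS : u ∈ S generalizing S
  · exact this Sᶜ (by rw [cross_compl, hc]) (by simpa using huS)
  apply h1 (S.erase u)
  have hsub : ({p, q} : Finset E) ⊆ cross s t {u} := by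
    intro e he; simp only [mem_insert, mem_singleton] at he
    rcases he with rfl | rfl <;> assumption
  have : cross s t (S.erase u) = cross s t {u} \ {p, q} := by
    ext e
    have h := congrArg (fun X => e ∈ X) hc
    have h' := @hsub e
    simp only [eq_iff_iff] at h
    rw [mem_sdiff, ← h]
    rw [← h] at h'
    simp only [mem_cross, mem_singleton, mem_erase] at h' ⊢
    by_cases c1 : s e = u <;> by_cases c2 : t e = u <;> simp [c1, c2, huS] at h' ⊢ <;> tauto
  rw [this, card_sdiff_of_subset hsub, hu, card_pair hpq]

theorem flow_poor (n : ℕ) : ∀ (V : Type u) [Fintype V] (s t : E → V) (u w : V),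
    Fintype.card V = n → (∀ S, (cross s t S).card ≠ 1) → u ≠ w →
    (cross s t {u}).card = 3 → (cross s t {w}).card = 3 → (eb s t {u} {w}).card = 1 →
    ∃ θ : E → K8, (∀ e, θ e ≠ 0) ∧ bd s t θ = 0 ∧ Poor s t u w θ := by
  induction n using Nat.strong_induction_on with
  | _ n ih =>
  intro V _ s t u w hn h1 huw hu hw he
  by_cases h3 : H3 s t
  · exact base_poor s t h3 u w huw hu hw he
  -- reduction step
  have red : ∀ S x y, x ∈ S → y ∉ S → (cross s t S = ∅ ∨ ∃ p q, p ≠ q ∧ cross s t S = {p, q} ∧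
      ((s p = x ∧ t p = y) ∨ (s p = y ∧ t p = x))) → x ≠ u → x ≠ w → y ≠ u → y ≠ w →
      ∃ θ : E → K8, (∀ e, θ e ≠ 0) ∧ bd s t θ = 0 ∧ Poor s t u w θ := by
    intro S x y hx hy hc xu xw yu yw
    have hxy : x ≠ y := fun h => hy (h ▸ hx)
    have pre : ∀ z (hz : z ≠ y), z ≠ x → (univ.filter fun v => pr x y hxy v ∈ ({⟨z, hz⟩} : Finset {v : V // v ≠ y})) = {z} := by
      intro z hz hzx
      ext v; simp [pr_eq x y hxy v z hz hzx]
    have cru := cross_pr x y hxy s t {⟨u, yu.symm⟩}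
    rw [pre u _ xu.symm] at cru
    have crw := cross_pr x y hxy s t {⟨w, yw.symm⟩}
    rw [pre w _ xw.symm] at crw
    have ebuw : eb (pr x y hxy ∘ s) (pr x y hxy ∘ t) {⟨u, yu.symm⟩} {⟨w, yw.symm⟩} =
        eb s t {u} {w} := by
      ext e
      simp only [mem_eb, mem_singleton, Function.comp, pr_eq x y hxy _ u yu.symm xu.symm,
        pr_eq x y hxy _ w yw.symm xw.symm]
    obtain ⟨θ, a, b, c⟩ := ih _ (hn ▸ card_contr y) {v : V // v ≠ y} (pr x y hxy ∘ s)
      (pr x y hxy ∘ t) ⟨u, yu.symm⟩ ⟨w, yw.symm⟩ rfl (fun S' => by rw [cross_pr]; exact h1 _)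
      (by simpa using huw) (by rw [cru, hu]) (by rw [crw, hw]) (by rw [ebuw, he])
    obtain ⟨θ', a', b', c'⟩ := lift_contr s t x y hxy S hx hy θ a b hc
    refine ⟨θ', a', b', ?_⟩
    have keep : ∀ z, z ≠ x → z ≠ y → ∀ e ∈ cross s t {z}, θ' e = θ e := by
      intro z zx zy e he
      apply c'
      simp only [mem_cross, mem_singleton] at he
      rcases he with ⟨h, -⟩ | ⟨-, h⟩ <;> rw [h] <;> tauto
    intro e he'
    obtain ⟨d, hd, hde⟩ := c e (by rw [cru]; exact he')
    rw [crw] at hd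
    exact ⟨d, hd, by rw [keep w xw.symm yw.symm d hd, keep u xu.symm yu.symm e he', hde]⟩
  obtain ⟨e0, he0⟩ := card_eq_one.1 he
  have he0' : (s e0 = u ∧ t e0 = w) ∨ (s e0 = w ∧ t e0 = u) := by
    have : e0 ∈ eb s t {u} {w} := by simp [he0]
    simpa [mem_eb] using this
  have e0u : e0 ∈ cross s t {u} := by
    simp only [mem_cross, mem_singleton]
    rcases he0' with ⟨h, h'⟩ | ⟨h, h'⟩ <;> rw [h, h'] <;> simp [huw.symm]
  have e0w : e0 ∈ cross s t {w} := by
    simp only [mem_cross, mem_singleton]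
    rcases he0' with ⟨h, h'⟩ | ⟨h, h'⟩ <;> rw [h, h'] <;> simp [huw]
  obtain ⟨S, hS, hS', hc⟩ := not_H3 s t h1 h3
  rcases hc with hc | ⟨p, q, hpq, hc⟩
  · -- empty cut
    wlog huS : u ∈ S generalizing S
    · refine this Sᶜ ?_ ?_ (by rw [cross_compl, hc]) (by simpa using huS)
      · rw [nonempty_iff_ne_empty]; simpa using hS'
      · intro h; rw [compl_eq_univ_iff] at h; simp [h] at hS
    have inS : ∀ e, s e ∈ S ↔ t e ∈ S := by
      intro e
      have h := congrArg (fun X => e ∈ X) hc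
      simp only [mem_cross, notMem_empty, eq_iff_iff, iff_false] at h
      tauto
    have hwS : w ∈ S := by
      rcases he0' with ⟨h, h'⟩ | ⟨h, h'⟩
      · rw [← h', ← inS, h]; exact huS
      · rw [← h, inS, h']; exact huS
    obtain ⟨y, hy⟩ : ∃ y, y ∉ S := by
      by_contra h; push Not at h; exact hS' (eq_univ_iff_forall.2 h)
    obtain ⟨a, ha, hae⟩ := exists_mem_ne (s := cross s t {u}) (by omega) e0
    have hae' : a ∉ eb s t {u} {w} := by simp [he0, hae]
    obtain ⟨x, hxS, hxu, hxw⟩ : ∃ x ∈ S, x ≠ u ∧ x ≠ w := by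
      simp only [mem_cross, mem_eb, mem_singleton] at ha hae'
      have := inS a
      rcases ha with ⟨h, h'⟩ | ⟨h, h'⟩
      · exact ⟨t a, by rw [← this, h]; exact huS, h', by tauto⟩
      · exact ⟨s a, by rw [this, h']; exact huS, h, by tauto⟩
    exact red S x y hxS hy (Or.inl hc) hxu hxw (fun h => hy (h ▸ huS)) (fun h => hy (h ▸ hwS))
  · -- a cut of size two
    have nb := not_both s t h1 S p q hpq hc
    have away : ∀ p q, p ≠ q → cross s t S = {p, q} → p ∉ cross s t {u} → p ∉ cross s t {w} →
        ∃ θ : E → K8, (∀ e, θ e ≠ 0) ∧ bd s t θ = 0 ∧ Poor s t u w θ := by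
      intro p q hpq hc hpu hpw
      obtain ⟨x, y, hx, hy, h⟩ := ends_of_cross s t S p (by simp [hc])
      have hxy : x ≠ y := fun h => hy (h ▸ hx)
      have far : ∀ z, p ∉ cross s t {z} → x ≠ z ∧ y ≠ z := by
        intro z hz
        simp only [mem_cross, mem_singleton] at hz
        rcases h with ⟨h, h'⟩ | ⟨h, h'⟩ <;> rw [h, h'] at hz <;>
          refine ⟨?_, ?_⟩ <;> rintro rfl <;> simp [hxy, hxy.symm] at hz
      obtain ⟨xu, yu⟩ := far u hpu
      obtain ⟨xw, yw⟩ := far w hpw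
      exact red S x y hx hy (Or.inr ⟨p, q, hpq, hc, h⟩) xu xw yu yw
    have near : ∀ p q, p ≠ q → cross s t S = {p, q} → p ∈ cross s t {u} → q ∈ cross s t {w} →
        p ≠ e0 → q ≠ e0 →
        ∃ θ : E → K8, (∀ e, θ e ≠ 0) ∧ bd s t θ = 0 ∧ Poor s t u w θ := by
      intro p q hpq hc hpu hqw hp0 hq0
      obtain ⟨θ, a, b⟩ := flow8 _ V s t rfl h1
      refine ⟨θ, a, b, ?_⟩
      have e1 := sum_star s t θ b S
      rw [hc, sum_pair hpq] at e1
      have two : ∀ a b : K8, a + b = 0 → b = a := by decide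
      have epq : θ q = θ p := two _ _ e1
      have third : ∀ z p, (cross s t {z}).card = 3 → e0 ∈ cross s t {z} → p ∈ cross s t {z} →
          p ≠ e0 → ∃ r, cross s t {z} = {e0, p, r} ∧ θ r = θ e0 + θ p := by
        intro z p hz h0 hp hne
        have hcard : ((cross s t {z}).erase e0 |>.erase p).card = 1 := by
          rw [card_erase_of_mem (by simp [hp, hne]), card_erase_of_mem h0, hz]
        obtain ⟨r, hr⟩ := card_eq_one.1 hcard
        have hr' : cross s t {z} = {e0, p, r} := by
          rw [← hr, insert_erase (by simp [hp, hne]), insert_erase h0]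
        have hrm : r ∈ ((cross s t {z}).erase e0 |>.erase p) := by simp [hr]
        simp only [mem_erase] at hrm
        refine ⟨r, hr', ?_⟩
        have e2 := sum_star s t θ b {z}
        rw [hr', sum_insert (by simp [hne.symm, hrm.2.1.symm]), sum_pair hrm.1.symm,
          ← add_assoc] at e2
        exact two _ _ e2
      obtain ⟨r, hr, hr'⟩ := third u p hu e0u hpu hp0
      obtain ⟨r2, hr2, hr2'⟩ := third w q hw e0w hqw hq0
      intro d hd
      rw [hr] at hd
      rw [hr2]
      simp only [mem_insert, mem_singleton] at hd
      rcases hd with rfl | rfl | rfl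
      · exact ⟨d, by simp, rfl⟩
      · exact ⟨q, by simp, epq⟩
      · exact ⟨r2, by simp, by rw [hr', hr2', epq]⟩
    have hc' : cross s t S = {q, p} := by rw [hc, pair_comm]
    by_cases pu : p ∈ cross s t {u}
    · have qu : q ∉ cross s t {u} := fun h => nb u hu pu h
      by_cases qw : q ∈ cross s t {w}
      · have pw : p ∉ cross s t {w} := fun h => nb w hw h qw
        exact near p q hpq hc pu qw (fun h => pw (h ▸ e0w)) (fun h => qu (h ▸ e0u))
      · exact away q p hpq.symm hc' qu qw
    · by_cases pw : p ∈ cross s t {w}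
      · have qw : q ∉ cross s t {w} := fun h => nb w hw pw h
        by_cases qu : q ∈ cross s t {u}
        · exact near q p hpq.symm hc' qu pw (fun h => qw (h ▸ e0w)) (fun h => pu (h ▸ e0u))
        · exact away q p hpq.symm hc' qu qw
      · exact away p q hpq hc pu pw

end PF

namespace PF
open Finset Classical
universe u
variable {V : Type u} [Fintype V]

noncomputable def src (G : SimpleGraph V) (e : G.edgeSet) : V := (Quot.out e.1).1
noncomputable def tgt (G : SimpleGraph V) (e : G.edgeSet) : V := (Quot.out e.1).2

lemma mk_ends (G : SimpleGraph V) (e : G.edgeSet) : s(src G e, tgt G e) = e.1 :=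
  Quot.out_eq e.1

lemma adj_ends (G : SimpleGraph V) (e : G.edgeSet) : G.Adj (src G e) (tgt G e) := by
  rw [← mem_edgeSet, mk_ends]; exact e.2

lemma mem_cross_one (G : SimpleGraph V) (e : G.edgeSet) (v : V) :
    e ∈ cross (src G) (tgt G) {v} ↔ v ∈ e.1 := by
  rw [← mk_ends G e, Sym2.mem_iff]
  have := (adj_ends G e).ne
  simp only [mem_cross, mem_singleton]
  constructor
  · rintro (⟨h, -⟩ | ⟨-, h⟩)
    · exact Or.inl h.symm
    · exact Or.inr h.symm
  · rintro (h | h)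
    · left; exact ⟨h.symm, fun h' => this (h.symm.trans h'.symm)⟩
    · right; exact ⟨fun h' => this (h'.trans h), h.symm⟩

lemma image_cross (G : SimpleGraph V) (v : V) :
    Subtype.val '' ((cross (src G) (tgt G) {v} : Finset G.edgeSet) : Set G.edgeSet) =
      G.incidenceSet v := by
  ext e
  simp only [Set.mem_image, mem_coe, mem_cross_one]
  constructor
  · rintro ⟨e, h, rfl⟩; exact ⟨e.2, h⟩
  · rintro ⟨h1, h2⟩; exact ⟨⟨e, h1⟩, h2, rfl⟩

lemma card_cross_one (G : SimpleGraph V) (hG : IsCubic G) (v : V) :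
    (cross (src G) (tgt G) {v}).card = 3 := by
  rw [← Set.ncard_coe_finset, ← Set.ncard_image_of_injective _ Subtype.val_injective,
    image_cross, ← hG v]
  exact Nat.card_congr (G.incidenceSetEquivNeighborSet v)

lemma no_one_cut (G : SimpleGraph V) (hb : Bridgeless G) (S : Finset V) :
    (cross (src G) (tgt G) S).card ≠ 1 := by
  intro h
  obtain ⟨e, he⟩ := card_eq_one.1 h
  apply hb e.1 e.2
  rw [← mk_ends G e, isBridge_iff, mk_ends]
  have key : ∀ a b, (G.deleteEdges {e.1}).Reachable a b → (a ∈ S ↔ b ∈ S) := by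
    rintro a b ⟨w⟩
    induction w with
    | nil => rfl
    | @cons a b c hab _ ih =>
      rw [← ih]
      rw [deleteEdges_adj] at hab
      obtain ⟨h1, h2⟩ := hab
      let f : G.edgeSet := ⟨s(a, b), h1⟩
      have hf : f ∉ cross (src G) (tgt G) S := by
        rw [he, mem_singleton]
        intro h; exact h2 (congrArg Subtype.val h)
      rw [mem_cross] at hf
      have := mk_ends G f
      rw [Sym2.eq_iff] at this
      rcases this with ⟨h, h'⟩ | ⟨h, h'⟩ <;> rw [h, h'] at hf <;> tauto
  intro hr
  have h1 := key _ _ hr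
  have : e ∈ cross (src G) (tgt G) S := by simp [he]
  rw [mem_cross] at this
  tauto

lemma eb_one (G : SimpleGraph V) (u w : V) (h : G.Adj u w) :
    (eb (src G) (tgt G) {u} {w}).card = 1 := by
  rw [card_eq_one]
  refine ⟨⟨s(u, w), h⟩, ?_⟩
  ext e
  rw [mem_singleton, Subtype.ext_iff, ← mk_ends G e, Sym2.eq_iff, mem_eb]
  simp only [mem_singleton]

end PF

theorem stmt_10 {V : Type*} [Fintype V] (G : SimpleGraph V)
    (hG : IsCubic G) (hbl : Bridgeless G) (u w : V) (huw : G.Adj u w) :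
    ∃ θ : Sym2 V → ZMod 2 × ZMod 2 × ZMod 2,
      IsNowhereZeroFlow G θ ∧ IsPoorAt G θ u w := by
  classical
  obtain ⟨θ, h1, h2, h3⟩ := PF.flow_poor _ V (PF.src G) (PF.tgt G) u w rfl
    (PF.no_one_cut G hbl) huw.ne (PF.card_cross_one G hG u) (PF.card_cross_one G hG w)
    (PF.eb_one G u w huw)
  let Θ : Sym2 V → ZMod 2 × ZMod 2 × ZMod 2 := fun e => if h : e ∈ G.edgeSet then θ ⟨e, h⟩ else 0
  have hΘ : ∀ e : G.edgeSet, Θ e.1 = θ e := fun e => by simp [Θ]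
  have hcol : ∀ v, colorSet G Θ v = θ '' (PF.cross (PF.src G) (PF.tgt G) {v} : Finset G.edgeSet) := by
    intro v
    rw [colorSet, ← PF.image_cross, Set.image_image]
    simp only [hΘ]
  have hsum : ∀ v, ∑ e ∈ PF.cross (PF.src G) (PF.tgt G) {v}, θ e = 0 :=
    fun v => PF.sum_star _ _ θ h2 {v}
  refine ⟨Θ, ⟨?_, ?_⟩, ?_⟩
  · intro e he
    rw [hΘ ⟨e, he⟩]; exact h1 _
  · intro v
    rw [← PF.image_cross, finsum_mem_image Subtype.val_injective.injOn]
    simp only [hΘ]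
    rw [finsum_mem_coe_finset]
    exact hsum v
  · have hsub : colorSet G Θ u ⊆ colorSet G Θ w := by
      rw [hcol, hcol]
      rintro _ ⟨a, ha, rfl⟩
      obtain ⟨c, hc, hca⟩ := h3 a ha
      exact ⟨c, hc, hca⟩
    rw [IsPoorAt, Set.union_eq_self_of_subset_left hsub, hcol]
    obtain ⟨a, b, c, hab, hac, hbc, heq⟩ := Finset.card_eq_three.1 (PF.card_cross_one G hG w)
    have hs := hsum w
    rw [heq, Finset.sum_insert (by simp [hab, hac]), Finset.sum_pair hbc] at hs
    have dist : ∀ x y z : ZMod 2 × ZMod 2 × ZMod 2, x ≠ 0 → y ≠ 0 → z ≠ 0 → x + (y + z) = 0 →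
        x ≠ y ∧ x ≠ z ∧ y ≠ z := by
      intro x y z hx hy hz h
      refine ⟨?_, ?_, ?_⟩
      · rintro rfl
        rw [← add_assoc, PF.K8_two, zero_add] at h; exact hz h
      · rintro rfl
        rw [add_comm y, ← add_assoc, PF.K8_two, zero_add] at h; exact hy h
      · rintro rfl
        rw [PF.K8_two, add_zero] at h; exact hx h
    rw [heq, Set.ncard_eq_three]
    obtain ⟨d1, d2, d3⟩ := dist _ _ _ (h1 a) (h1 b) (h1 c) hs
    refine ⟨θ a, θ b, θ c, d1, d2, d3, ?_⟩
    simp [Set.image_insert_eq]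
end

section
/- Let G be a finite simple cubic graph that is 3-edge-connected, and let e and f be two distinct adjacent edges of G (edges sharing an endpoint). Then G admits a nowhere-zero Z_2^3-flow θ such that both e and f are rich with respect to θ. -/
open SimpleGraph

abbrev K8 := ZMod 2 × ZMod 2 × ZMod 2

set_option synthInstance.maxHeartbeats 400000 in
set_option synthInstance.maxSize 2000 in
lemma card5_aux : ∀ α β γ : K8, (α.1 = 0 ∧ (β.1 ≠ 0 ∨ (α + β).1 ≠ 0) ∧ γ.1 = 0 ∧ α ≠ 0 ∧ γ ≠ 0 ∧
    α + γ ≠ 0) → (({α, β, α + β} ∪ {α, γ, α + γ} : Finset K8)).card = 5 := by decide +kernel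

lemma card5 (α β β' γ γ' : K8) (h1 : α.1 = 0) (h2 : β.1 ≠ 0 ∨ β'.1 ≠ 0) (h3 : γ.1 = 0)
    (h4 : α ≠ 0) (h5 : γ ≠ 0) (h6 : γ' ≠ 0) (h7 : α + β + β' = 0) (h8 : α + γ + γ' = 0) :
    ({α, β, β'} ∪ {α, γ, γ'} : Set K8).ncard = 5 := by
  have hz : ∀ x : K8, x + x = 0 := by decide
  have e : ∀ x y z : K8, x + y + z = 0 → z = x + y := by
    intro x y z h
    rw [← sub_eq_zero, ← h, sub_eq_iff_eq_add, add_assoc, add_comm z, ← add_assoc, hz, zero_add]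
  obtain rfl := e _ _ _ h7
  obtain rfl := e _ _ _ h8
  rw [← card5_aux α β γ ⟨h1, h2, h3, h4, h5, h6⟩, ← Set.ncard_coe_finset]
  simp only [Finset.coe_union, Finset.coe_insert, Finset.coe_singleton]


section Aux
set_option linter.unusedSectionVars false
open Classical

/-- number of ordered pairs from `A` to `B` adjacent in `F` -/
noncomputable def eN {V : Type*} [Fintype V] (F : SimpleGraph V) (A B : Set V) : ℕ :=
  ∑ p : V × V, if p.1 ∈ A ∧ p.2 ∈ B ∧ F.Adj p.1 p.2 then 1 else 0

noncomputable def bdry {V M : Type*} [Fintype V] [AddCommMonoid M] (θ : Sym2 V → M) (x : V) : M :=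
  ∑ y, θ s(x, y)

def SuppOn {V M : Type*} [Zero M] (S : SimpleGraph V) (θ : Sym2 V → M) : Prop :=
  ∀ a b, ¬ S.Adj a b → θ s(a, b) = 0

/-- linked by a chain -/
def Lk {V : Type*} [Fintype V] (S : SimpleGraph V) (a b : V) : Prop :=
  ∃ ρ : Sym2 V → ZMod 2, SuppOn S ρ ∧
    ∀ x, bdry ρ x = (if x = a then 1 else 0) + (if x = b then 1 else 0)

noncomputable def ind {V : Type*} (F : SimpleGraph V) : Sym2 V → ZMod 2 :=
  fun e => if e ∈ F.edgeSet then 1 else 0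

variable {V : Type*} [Fintype V]

lemma zz2 (a : ZMod 2) : a + a = 0 := by revert a; decide

lemma Lk.refl (S : SimpleGraph V) (a : V) : Lk S a a :=
  ⟨0, fun _ _ _ => rfl, fun x => by simp [bdry, zz2]⟩

lemma Lk.symm {S : SimpleGraph V} {a b : V} (h : Lk S a b) : Lk S b a := by
  obtain ⟨ρ, h1, h2⟩ := h
  exact ⟨ρ, h1, fun x => by rw [h2, add_comm]⟩

lemma Lk.trans {S : SimpleGraph V} {a b c : V} (h : Lk S a b) (h' : Lk S b c) : Lk S a c := by
  obtain ⟨ρ, h1, h2⟩ := h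
  obtain ⟨σ, h3, h4⟩ := h'
  refine ⟨ρ + σ, fun x y hxy => by simp [h1 x y hxy, h3 x y hxy], fun x => ?_⟩
  have : bdry (ρ + σ) x = bdry ρ x + bdry σ x := by simp [bdry, Finset.sum_add_distrib]
  rw [this, h2, h4]
  have := zz2 (if x = b then 1 else 0)
  linear_combination this

lemma Lk.mono {S S' : SimpleGraph V} (hS : S ≤ S') {a b : V} (h : Lk S a b) : Lk S' a b := by
  obtain ⟨ρ, h1, h2⟩ := h
  exact ⟨ρ, fun x y hxy => h1 x y (fun h => hxy (hS h)), h2⟩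

lemma bdry_single {a b : V} (hab : a ≠ b) (x : V) :
    bdry (fun e => if e = s(a, b) then (1 : ZMod 2) else 0) x
      = (if x = a then 1 else 0) + (if x = b then 1 else 0) := by
  have : ∀ y, (if s(x, y) = s(a, b) then (1 : ZMod 2) else 0)
      = (if y = b then (if x = a then 1 else 0) else 0)
        + (if y = a then (if x = b then 1 else 0) else 0) := by
    intro y
    simp only [Sym2.eq_iff]
    grind
  simp only [bdry, this, Finset.sum_add_distrib, Finset.sum_ite_eq', Finset.mem_univ, if_true]

lemma Lk.adj {S : SimpleGraph V} {a b : V} (h : S.Adj a b) : Lk S a b := by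
  refine ⟨_, ?_, bdry_single h.ne⟩
  intro x y hxy
  have : s(x, y) ≠ s(a, b) := by
    intro h'
    rw [← SimpleGraph.mem_edgeSet, h', SimpleGraph.mem_edgeSet] at hxy
    exact hxy h
  simp [this]

lemma eN_singleton_univ (F : SimpleGraph V) (z : V) :
    eN F {z} Set.univ = (Finset.univ.filter (fun y => F.Adj z y)).card := by
  rw [Finset.card_filter]
  simp only [eN, Fintype.sum_prod_type, Set.mem_singleton_iff, Set.mem_univ, true_and]
  rw [Finset.sum_eq_single z]
  · simp
  · intro b _ hb; simp [hb]
  · simp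

lemma eN_mono {F F' : SimpleGraph V} (h : F ≤ F') {A A' B B' : Set V} (hA : A ⊆ A') (hB : B ⊆ B') :
    eN F A B ≤ eN F' A' B' := by
  apply Finset.sum_le_sum
  intro p _
  have h1 := @hA p.1
  have h2 := @hB p.2
  have h3 := @h p.1 p.2
  split_ifs <;> first | omega | tauto

lemma eN_comm (F : SimpleGraph V) (A B : Set V) : eN F A B = eN F B A := by
  unfold eN
  rw [← (Equiv.prodComm V V).sum_comp]
  apply Finset.sum_congr rfl
  intro p _
  simp only [Equiv.prodComm_apply, Prod.fst_swap, Prod.snd_swap, F.adj_comm p.2 p.1]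
  congr 1
  simp only [eq_iff_iff]; tauto

lemma eN_pos {F : SimpleGraph V} {A B : Set V} {a b : V} (ha : a ∈ A) (hb : b ∈ B)
    (h : F.Adj a b) : 1 ≤ eN F A B := by
  have := Finset.single_le_sum (s := Finset.univ) (a := (a, b))
    (f := fun p : V × V => if p.1 ∈ A ∧ p.2 ∈ B ∧ F.Adj p.1 p.2 then 1 else 0)
    (fun _ _ => Nat.zero_le _) (Finset.mem_univ _)
  simpa [eN, ha, hb, h] using this

lemma eN_two {F : SimpleGraph V} {A : Set V} {z b c : V} (hb : b ∈ A) (hc : c ∈ A)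
    (hbc : b ≠ c) (h : F.Adj z b) (h' : F.Adj z c) : 2 ≤ eN F {z} A := by
  have : ∑ p : V × V, ((if p = (z, b) then 1 else 0) + (if p = (z, c) then 1 else 0)) ≤ eN F {z} A := by
    apply Finset.sum_le_sum
    rintro ⟨x, y⟩ _
    simp only [Prod.mk.injEq, Set.mem_singleton_iff]
    grind
  simpa [Finset.sum_add_distrib] using this

lemma exists_of_eN_pos {F : SimpleGraph V} {A B : Set V} (h : 1 ≤ eN F A B) :
    ∃ a ∈ A, ∃ b ∈ B, F.Adj a b := by
  by_contra hc
  push Not at hc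
  have : eN F A B = 0 := by
    apply Finset.sum_eq_zero
    intro p _
    rw [if_neg]
    rintro ⟨h1, h2, h3⟩
    exact hc _ h1 _ h2 h3
  omega

lemma eN_union_left (F : SimpleGraph V) {A A' : Set V} (B : Set V) (h : Disjoint A A') :
    eN F (A ∪ A') B = eN F A B + eN F A' B := by
  unfold eN
  rw [← Finset.sum_add_distrib]
  apply Finset.sum_congr rfl
  intro p _
  have : p.1 ∈ A → p.1 ∉ A' := fun h1 h2 => Set.disjoint_left.1 h h1 h2
  simp only [Set.mem_union]
  grind

lemma eN_union_right (F : SimpleGraph V) (A : Set V) {B B' : Set V} (h : Disjoint B B') :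
    eN F A (B ∪ B') = eN F A B + eN F A B' := by
  rw [eN_comm, eN_union_left F A h, eN_comm F B, eN_comm F B']

lemma eN_submod (F : SimpleGraph V) (A B : Set V) :
    eN F (A ∩ B) (A ∩ B)ᶜ + eN F (A ∪ B) (A ∪ B)ᶜ ≤ eN F A Aᶜ + eN F B Bᶜ := by
  unfold eN
  rw [← Finset.sum_add_distrib, ← Finset.sum_add_distrib]
  apply Finset.sum_le_sum
  intro p _
  simp only [Set.mem_union, Set.mem_inter_iff, Set.mem_compl_iff]
  grind

lemma eN_erase (F : SimpleGraph V) (A : Set V) (z : V) (hz : z ∈ A) :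
    eN F (A \ {z}) (A \ {z})ᶜ + eN F {z} Aᶜ = eN F A Aᶜ + eN F {z} A := by
  rw [eN_comm F {z} A]
  unfold eN
  rw [← Finset.sum_add_distrib, ← Finset.sum_add_distrib]
  apply Finset.sum_congr rfl
  rintro ⟨x, y⟩ _
  have := F.irrefl (v := z)
  simp only [Set.mem_sdiff, Set.mem_singleton_iff, Set.mem_compl_iff]
  grind

lemma bdry_ind (F : SimpleGraph V) (z : V) : bdry (ind F) z = (eN F {z} Set.univ : ZMod 2) := by
  rw [eN_singleton_univ, Finset.card_filter]
  simp [bdry, ind]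

/-- connected even piece containing vertex set `T` -/
def Piece (T : Set V) (F : SimpleGraph V) : Prop :=
  (∀ a b, F.Adj a b → a ∈ T) ∧ (∀ a ∈ T, ∀ b ∈ T, Lk F a b) ∧ ∀ x, bdry (ind F) x = 0

lemma menger (H : SimpleGraph V) (y₁ y₂ : V) (hy : y₁ ≠ y₂)
    (hcut : ∀ A : Set V, y₁ ∈ A → y₂ ∉ A → 2 ≤ eN H A Aᶜ)
    (hd1 : eN H {y₁} Set.univ ≤ 2) (hd2 : eN H {y₂} Set.univ ≤ 2)
    (hd : ∀ z, eN H {z} Set.univ ≤ 3) :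
    ∃ F T, F ≤ H ∧ Piece T F ∧ y₁ ∈ T ∧ y₂ ∈ T ∧ ∀ a ∈ T, ∃ b, F.Adj a b := by
  obtain ⟨F, -, hF⟩ := exists_minimal_le_of_wellFoundedLT
    (fun F : SimpleGraph V => F ≤ H ∧ ∀ A : Set V, y₁ ∈ A → y₂ ∉ A → 2 ≤ eN F A Aᶜ) H
    ⟨le_rfl, hcut⟩
  obtain ⟨⟨hFH, hFcut⟩, hmin⟩ := hF
  have tight : ∀ a b, F.Adj a b → ∃ A : Set V, y₁ ∈ A ∧ y₂ ∉ A ∧ eN F A Aᶜ ≤ 2 ∧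
      (a ∈ A ∧ b ∉ A ∨ b ∈ A ∧ a ∉ A) := by
    intro a b hab
    have hlt : ¬ (F ≤ F.deleteEdges {s(a, b)}) := fun h => by simpa using h hab
    have hnot : ¬ (∀ A : Set V, y₁ ∈ A → y₂ ∉ A → 2 ≤ eN (F.deleteEdges {s(a, b)}) A Aᶜ) :=
      fun h => hlt (hmin ⟨(F.deleteEdges_le _).trans hFH, h⟩ (F.deleteEdges_le _))
    push Not at hnot
    obtain ⟨A, h1, h2, h3⟩ := hnot
    have hcr : a ∈ A ∧ b ∉ A ∨ b ∈ A ∧ a ∉ A := by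
      by_contra hc
      have : eN F A Aᶜ ≤ eN (F.deleteEdges {s(a, b)}) A Aᶜ := by
        apply Finset.sum_le_sum
        rintro ⟨x, y⟩ _
        simp only [SimpleGraph.deleteEdges_adj, Set.mem_singleton_iff, Sym2.eq_iff,
          Set.mem_compl_iff]
        grind
      have := hFcut A h1 h2
      omega
    refine ⟨A, h1, h2, ?_, hcr⟩
    have : eN F A Aᶜ ≤ eN (F.deleteEdges {s(a, b)}) A Aᶜ +
        ∑ p : V × V, (if p = (if a ∈ A then (a, b) else (b, a)) then 1 else 0) := by
      unfold eN
      rw [← Finset.sum_add_distrib]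
      apply Finset.sum_le_sum
      rintro ⟨x, y⟩ _
      simp only [SimpleGraph.deleteEdges_adj, Set.mem_singleton_iff, Sym2.eq_iff,
        Set.mem_compl_iff]
      grind
    simp only [Finset.sum_ite_eq', Finset.mem_univ, if_true] at this
    omega
  -- separating sets
  have hsep : ∀ A : Set V, (y₁ ∈ A ↔ y₂ ∉ A) → 2 ≤ eN F A Aᶜ := by
    intro A h
    by_cases h1 : y₁ ∈ A
    · exact hFcut A h1 (h.1 h1)
    · have := hFcut Aᶜ h1 (by simp; tauto)
      rwa [compl_compl, eN_comm] at this
  have tight2 : ∀ a b, F.Adj a b → ∃ A : Set V, (y₁ ∈ A ↔ y₂ ∉ A) ∧ eN F A Aᶜ ≤ 2 ∧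
      a ∈ A ∧ b ∉ A := by
    intro a b hab
    obtain ⟨A, h1, h2, h3, h4 | h4⟩ := tight a b hab
    · exact ⟨A, by tauto, h3, h4⟩
    · refine ⟨Aᶜ, by simp; tauto, by rwa [compl_compl, eN_comm], h4.2, by simpa using h4.1⟩
  have hdF : ∀ z, eN F {z} Set.univ ≤ 3 := fun z => (eN_mono hFH le_rfl le_rfl).trans (hd z)
  have hsplit : ∀ z (A : Set V), eN F {z} A + eN F {z} Aᶜ = eN F {z} Set.univ := by
    intro z A
    rw [← eN_union_right F _ disjoint_compl_right, Set.union_compl_self]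
  have hout : ∀ z, z ≠ y₁ → z ≠ y₂ → ∀ A : Set V, (y₁ ∈ A ↔ y₂ ∉ A) → eN F A Aᶜ ≤ 2 → z ∈ A →
      eN F {z} Aᶜ ≤ eN F {z} A := by
    intro z h1 h2 A hA hA2 hz
    have := eN_erase F A z hz
    have := hsep (A \ {z}) (by simp [h1.symm, h2.symm, hA])
    omega
  have heven : ∀ z, eN F {z} Set.univ = 0 ∨ eN F {z} Set.univ = 2 := by
    intro z
    by_cases h1 : z = y₁
    · subst h1
      right
      have h3 := hFcut {z} rfl hy.symm
      have h4 := eN_mono (le_refl F) (le_refl ({z} : Set V)) (Set.subset_univ ({z} : Set V)ᶜ)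
      have h5 := eN_mono hFH (le_refl ({z} : Set V)) (le_refl Set.univ)
      omega
    by_cases h2 : z = y₂
    · subst h2
      right
      have h3 := hsep {z} (by simp [hy])
      have h4 := eN_mono (le_refl F) (le_refl ({z} : Set V)) (Set.subset_univ ({z} : Set V)ᶜ)
      have h5 := eN_mono hFH (le_refl ({z} : Set V)) (le_refl Set.univ)
      omega
    have hn1 : eN F {z} Set.univ ≠ 1 := by
      intro h
      obtain ⟨a, rfl, b, -, hab⟩ := exists_of_eN_pos h.ge
      obtain ⟨A, hA1, hA2, hA3, hA4⟩ := tight2 a b hab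
      have := hout a h1 h2 A hA1 hA2 hA3
      have := hsplit a A
      have := eN_pos (F := F) (A := {a}) (B := Aᶜ) rfl hA4 hab
      omega
    have hn3 : eN F {z} Set.univ ≠ 3 := by
      intro h
      have h' := h
      rw [eN_singleton_univ] at h'
      obtain ⟨a, ha, b, hb, c, hc, hab, hac, hbc⟩ := Finset.two_lt_card.1 (by rw [h']; norm_num)
      simp only [Finset.mem_filter, Finset.mem_univ, true_and] at ha hb hc
      have key : ∀ (A B : Set V) (a b : V), a ≠ b → F.Adj z a → F.Adj z b →
          (y₁ ∈ A ↔ y₂ ∉ A) → (y₁ ∈ B ↔ y₂ ∉ B) → (y₁ ∈ A ↔ y₁ ∈ B) → eN F A Aᶜ ≤ 2 →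
          eN F B Bᶜ ≤ 2 → z ∈ A → z ∈ B → a ∉ A → b ∉ B → False := by
        intro A B a b hab ha hb hA hB hAB hA2 hB2 hzA hzB haA hbB
        have s1 := eN_submod F A B
        have s2 := hsep (A ∩ B) (by simp; tauto)
        have s3 := hsep (A ∪ B) (by simp; tauto)
        have s4 := hout z h1 h2 (A ∩ B) (by simp; tauto) (by omega) ⟨hzA, hzB⟩
        have s5 := eN_two (F := F) (z := z) (A := (A ∩ B)ᶜ) (b := a) (c := b)
          (by simp [haA]) (by simp [hbB]) hab ha hb
        have := hsplit z (A ∩ B)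
        omega
      obtain ⟨A, hA1, hA2, hA3, hA4⟩ := tight2 z a ha
      obtain ⟨B, hB1, hB2, hB3, hB4⟩ := tight2 z b hb
      obtain ⟨C, hC1, hC2, hC3, hC4⟩ := tight2 z c hc
      by_cases k1 : y₁ ∈ A ↔ y₁ ∈ B
      · exact key A B a b hab ha hb hA1 hB1 k1 hA2 hB2 hA3 hB3 hA4 hB4
      by_cases k2 : y₁ ∈ A ↔ y₁ ∈ C
      · exact key A C a c hac ha hc hA1 hC1 k2 hA2 hC2 hA3 hC3 hA4 hC4
      · exact key B C b c hbc hb hc hB1 hC1 (by tauto) hB2 hC2 hB3 hC3 hB4 hC4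
    have := hdF z
    omega
  have hBadj : ∀ a b, F.Adj a b → Lk F y₁ a → Lk F y₁ b := fun a b hab h => h.trans (Lk.adj hab)
  have hy2B : Lk F y₁ y₂ := by
    by_contra hc
    have := hFcut {b | Lk F y₁ b} (Lk.refl _ _) hc
    obtain ⟨a, ha, b, hb, hab⟩ := exists_of_eN_pos (le_trans one_le_two this)
    exact hb (hBadj a b hab ha)
  have hconn : ∀ t t', F.Adj t t' → Lk F y₁ t := by
    intro t t' htt
    by_contra ht
    have ht' : ¬ Lk F y₁ t' := fun h => ht (hBadj _ _ htt.symm h)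
    obtain ⟨A, h1, h2, h3, h4⟩ := tight t t' htt
    have h5 := hFcut (A ∩ {b | Lk F y₁ b}) ⟨h1, Lk.refl _ _⟩ (fun h => h2 h.1)
    have : eN F (A ∩ {b | Lk F y₁ b}) (A ∩ {b | Lk F y₁ b})ᶜ +
        ∑ p : V × V, (if p = (if t ∈ A then (t, t') else (t', t)) then 1 else 0) ≤ eN F A Aᶜ := by
      unfold eN
      rw [← Finset.sum_add_distrib]
      apply Finset.sum_le_sum
      rintro ⟨x, y⟩ _
      have k1 := hBadj x y
      have k2 := htt.symm
      simp only [Set.mem_inter_iff, Set.mem_ofPred_eq, Set.mem_compl_iff]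
      grind
    simp only [Finset.sum_ite_eq', Finset.mem_univ, if_true] at this
    omega
  have hdeg : ∀ z, 2 ≤ eN F {z} {z}ᶜ → ∃ b, F.Adj z b := by
    intro z hz
    obtain ⟨a, rfl, b, -, hab⟩ := exists_of_eN_pos (le_trans one_le_two hz)
    exact ⟨b, hab⟩
  refine ⟨F, {a | ∃ b, F.Adj a b}, hFH, ⟨fun a b h => ⟨b, h⟩, ?_, ?_⟩, ?_, ?_, fun a h => h⟩
  · rintro a ⟨a', ha⟩ b ⟨b', hb⟩
    exact (hconn a a' ha).symm.trans (hconn b b' hb)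
  · intro x
    rw [bdry_ind]
    rcases heven x with h | h <;> rw [h]
    · rfl
    · rfl
  · exact hdeg _ (hFcut {y₁} rfl hy.symm)
  · exact hdeg _ (hsep {y₂} (by simp [hy]))

abbrev K4 := ZMod 2 × ZMod 2

def FlowOK (S : SimpleGraph V) (c : Sym2 V → ZMod 2) : Prop :=
  ∀ f : Sym2 V → K4, ∃ ψ : Sym2 V → K4, SuppOn S ψ ∧ (∀ x, bdry ψ x = 0) ∧
    ∀ a b, S.Adj a b → c s(a, b) = 0 → ψ s(a, b) ≠ f s(a, b)

def Good (G : SimpleGraph V) (X : Set V) (S : SimpleGraph V) (c : Sym2 V → ZMod 2) : Prop :=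
  S ≤ G ∧ (∀ a b, S.Adj a b → a ∈ X) ∧ (∀ a ∈ X, ∀ b ∈ X, Lk S a b) ∧ SuppOn S c ∧
    (∀ x, bdry c x = 0) ∧ FlowOK S c

lemma suppOn_ind (F : SimpleGraph V) : SuppOn F (ind F) := by
  intro a b h
  simp [ind, h]

lemma Piece.good {G F : SimpleGraph V} {T : Set V} (hP : Piece T F) (hF : F ≤ G) :
    Good G T F (ind F) := by
  refine ⟨hF, hP.1, hP.2.1, suppOn_ind F, hP.2.2, fun f => ⟨0, fun _ _ _ => rfl,
    fun x => by simp [bdry], ?_⟩⟩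
  intro a b hab h
  simp [ind, hab] at h

lemma piece_singleton (y : V) : Piece {y} (⊥ : SimpleGraph V) := by
  refine ⟨fun a b h => h.elim, ?_, ?_⟩
  · rintro a rfl b rfl
    exact Lk.refl _ _
  · intro x
    simp [bdry, ind]

lemma avoid2 (x y : K4) : ∃ γ : K4, γ ≠ x ∧ γ ≠ y := by revert x y; decide

lemma flowStep {S S' : SimpleGraph V} {c c' : Sym2 V → ZMod 2} (h : FlowOK S c) (hS : S ≤ S')
    (Q : Sym2 V → ZMod 2) (hQ : SuppOn S' Q) (hQ0 : ∀ x, bdry Q x = 0)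
    (a₁ b₁ a₂ b₂ : V) (hQ1 : Q s(a₁, b₁) = 1) (hQ2 : Q s(a₂, b₂) = 1)
    (hn1 : ¬ S.Adj a₁ b₁) (hn2 : ¬ S.Adj a₂ b₂)
    (hc : ∀ a b, S'.Adj a b → c' s(a, b) = 0 → (S.Adj a b ∧ c s(a, b) = 0) ∨
      s(a, b) = s(a₁, b₁) ∨ s(a, b) = s(a₂, b₂)) : FlowOK S' c' := by
  intro f
  obtain ⟨γ, hγ1, hγ2⟩ := avoid2 (f s(a₁, b₁)) (f s(a₂, b₂))
  obtain ⟨ψ, h1, h2, h3⟩ := h (fun e => f e - Q e • γ)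
  refine ⟨fun e => ψ e + Q e • γ, ?_, ?_, ?_⟩
  · intro a b hab
    simp [h1 a b (fun h => hab (hS h)), hQ a b hab]
  · intro x
    have h2' := h2 x
    have hQ' := hQ0 x
    simp only [bdry] at h2' hQ' ⊢
    rw [Finset.sum_add_distrib, h2', ← Finset.sum_smul, hQ']
    simp
  · intro a b hab hcab
    rcases hc a b hab hcab with ⟨k1, k2⟩ | k | k
    · have := h3 a b k1 k2
      intro h'
      exact this (by rw [← h']; simp)
    · simp only [k, h1 _ _ hn1, hQ1]; simpa using hγ1
    · simp only [k, h1 _ _ hn2, hQ2]; simpa using hγ2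

lemma bdry_add {M : Type*} [AddCommMonoid M] (f g : Sym2 V → M) (x : V) :
    bdry (f + g) x = bdry f x + bdry g x := by simp [bdry, Finset.sum_add_distrib]

noncomputable def sg (a b : V) : Sym2 V → ZMod 2 := fun e => if e = s(a, b) then 1 else 0

lemma bdry_sg {a b : V} (hab : a ≠ b) (x : V) :
    bdry (sg a b) x = (if x = a then 1 else 0) + (if x = b then 1 else 0) := bdry_single hab x

lemma suppOn_sg {S : SimpleGraph V} {a b : V} (h : S.Adj a b) : SuppOn S (sg a b) := by
  intro x y hxy
  have : s(x, y) ≠ s(a, b) := by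
    intro h'
    rw [← SimpleGraph.mem_edgeSet, h', SimpleGraph.mem_edgeSet] at hxy
    exact hxy h
  simp [sg, this]

lemma SuppOn.add {M : Type*} [AddCommMonoid M] {S : SimpleGraph V} {f g : Sym2 V → M}
    (hf : SuppOn S f) (hg : SuppOn S g) : SuppOn S (f + g) := fun a b h => by
  simp [hf a b h, hg a b h]

lemma SuppOn.mono {M : Type*} [AddCommMonoid M] {S S' : SimpleGraph V} {f : Sym2 V → M}
    (hf : SuppOn S f) (h : S ≤ S') : SuppOn S' f := fun a b hab => hf a b (fun k => hab (h k))

lemma step1 {G S : SimpleGraph V} {X : Set V} {c : Sym2 V → ZMod 2} (h : Good G X S c)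
    {a b : V} (ha : a ∈ X) (hb : b ∈ X) (hab : G.Adj a b) (hS : ¬ S.Adj a b) :
    Good G X (S ⊔ SimpleGraph.edge a b) c := by
  obtain ⟨h1, h2, h3, h4, h5, h6⟩ := h
  have hadj : ∀ x y, (S ⊔ SimpleGraph.edge a b).Adj x y → S.Adj x y ∨ s(x, y) = s(a, b) := by
    intro x y h
    rw [SimpleGraph.sup_adj, SimpleGraph.edge_adj] at h
    simp only [Sym2.eq_iff]
    tauto
  have hle : S ≤ S ⊔ SimpleGraph.edge a b := le_sup_left
  have he : (S ⊔ SimpleGraph.edge a b).Adj a b := by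
    rw [SimpleGraph.sup_adj, SimpleGraph.edge_adj]
    simp [hab.ne]
  refine ⟨?_, ?_, fun x hx y hy => (h3 x hx y hy).mono hle, h4.mono hle, h5, ?_⟩
  · intro x y hxy
    rcases hadj x y hxy with h | h
    · exact h1 h
    · rw [← SimpleGraph.mem_edgeSet, h]; exact hab
  · intro x y hxy
    rcases hadj x y hxy with h | h
    · exact h2 x y h
    · simp only [Sym2.eq_iff] at h
      rcases h with ⟨rfl, -⟩ | ⟨rfl, -⟩ <;> assumption
  · obtain ⟨ρ, r1, r2⟩ := h3 a ha b hb
    refine flowStep h6 hle (sg a b + ρ) ((suppOn_sg he).add (r1.mono hle)) ?_ a b a b ?_ ?_ hS hS ?_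
    · intro x
      rw [bdry_add, r2, bdry_sg hab.ne, zz2]
    · simp [sg, r1 a b hS]
    · simp [sg, r1 a b hS]
    · intro x y hxy hc
      rcases hadj x y hxy with h | h
      · exact Or.inl ⟨h, hc⟩
      · exact Or.inr (Or.inl h)

lemma step2 {G S F : SimpleGraph V} {X T : Set V} {c : Sym2 V → ZMod 2} (h : Good G X S c)
    (hP : Piece T F) (hF : F ≤ G) (hXT : ∀ x ∈ X, x ∉ T) {a₁ a₂ y₁ y₂ : V}
    (ha₁ : a₁ ∈ X) (ha₂ : a₂ ∈ X) (hy₁ : y₁ ∈ T) (hy₂ : y₂ ∈ T) (e₁ : G.Adj a₁ y₁)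
    (e₂ : G.Adj a₂ y₂) (hne : a₁ ≠ a₂ ∨ y₁ ≠ y₂) :
    ∃ S', Good G (X ∪ T) S' (c + ind F) ∧ S ≤ S' := by
  obtain ⟨h1, h2, h3, h4, h5, h6⟩ := h
  obtain ⟨p1, p2, p3⟩ := hP
  have hXT' : ∀ x ∈ T, x ∉ X := fun x hx hx' => hXT x hx' hx
  obtain ⟨S', hS'⟩ : ∃ S', S' = S ⊔ F ⊔ SimpleGraph.edge a₁ y₁ ⊔ SimpleGraph.edge a₂ y₂ := ⟨_, rfl⟩
  have hSS : S ≤ S' := by rw [hS']; exact le_sup_left.trans (le_sup_left.trans le_sup_left)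
  have hFS : F ≤ S' := by rw [hS']; exact le_sup_right.trans (le_sup_left.trans le_sup_left)
  have hadj : ∀ x y, S'.Adj x y → S.Adj x y ∨ F.Adj x y ∨ s(x, y) = s(a₁, y₁) ∨
      s(x, y) = s(a₂, y₂) := by
    intro x y h
    simp only [hS', SimpleGraph.sup_adj, SimpleGraph.edge_adj] at h
    simp only [Sym2.eq_iff]
    tauto
  have he₁ : S'.Adj a₁ y₁ := by
    simp [hS', SimpleGraph.sup_adj, SimpleGraph.edge_adj, e₁.ne]
  have he₂ : S'.Adj a₂ y₂ := by
    simp [hS', SimpleGraph.sup_adj, SimpleGraph.edge_adj, e₂.ne]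
  have hn : ∀ a ∈ X, ∀ y ∈ T, ¬ S.Adj a y ∧ ¬ F.Adj a y := fun a ha y hy =>
    ⟨fun h => hXT' y hy (h2 y a h.symm), fun h => hXT a ha (p1 a y h)⟩
  have hl1 : ∀ x ∈ X ∪ T, Lk S' a₁ x := by
    rintro x (hx | hx)
    · exact (h3 _ ha₁ _ hx).mono hSS
    · exact (Lk.adj he₁).trans ((p2 _ hy₁ _ hx).mono hFS)
  refine ⟨S', ⟨?_, ?_, fun x hx y hy => (hl1 x hx).symm.trans (hl1 y hy),
    (h4.mono hSS).add ((suppOn_ind F).mono hFS), fun x => by rw [bdry_add, h5, p3, add_zero], ?_⟩,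
    hSS⟩
  · intro x y hxy
    rcases hadj x y hxy with h | h | h | h
    · exact h1 h
    · exact hF h
    · rw [← SimpleGraph.mem_edgeSet, h]; exact e₁
    · rw [← SimpleGraph.mem_edgeSet, h]; exact e₂
  · intro x y hxy
    rcases hadj x y hxy with h | h | h | h
    · exact Or.inl (h2 x y h)
    · exact Or.inr (p1 x y h)
    · simp only [Sym2.eq_iff] at h
      rcases h with ⟨rfl, -⟩ | ⟨rfl, -⟩
      · exact Or.inl ha₁
      · exact Or.inr hy₁
    · simp only [Sym2.eq_iff] at h
      rcases h with ⟨rfl, -⟩ | ⟨rfl, -⟩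
      · exact Or.inl ha₂
      · exact Or.inr hy₂
  · obtain ⟨ρ, r1, r2⟩ := h3 a₁ ha₁ a₂ ha₂
    obtain ⟨σ, s1, s2⟩ := p2 y₁ hy₁ y₂ hy₂
    have hne' : s(a₁, y₁) ≠ s(a₂, y₂) := by
      rw [Ne, Sym2.eq_iff]
      rintro (⟨k1, k2⟩ | ⟨k1, k2⟩)
      · tauto
      · exact hXT a₁ ha₁ (k1 ▸ hy₂)
    obtain ⟨n1, n1'⟩ := hn a₁ ha₁ y₁ hy₁
    obtain ⟨n2, n2'⟩ := hn a₂ ha₂ y₂ hy₂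
    refine flowStep h6 hSS (sg a₁ y₁ + sg a₂ y₂ + ρ + σ)
      ((((suppOn_sg he₁).add (suppOn_sg he₂)).add (r1.mono hSS)).add (s1.mono hFS))
      ?_ a₁ y₁ a₂ y₂ ?_ ?_ n1 n2 ?_
    · intro x
      rw [bdry_add, bdry_add, bdry_add, r2, s2, bdry_sg e₁.ne, bdry_sg e₂.ne]
      have k := fun z => zz2 (if x = z then 1 else 0)
      linear_combination k a₁ + k a₂ + k y₁ + k y₂
    · simp [sg, r1 _ _ n1, s1 _ _ n1', hne']
    · simp [sg, r1 _ _ n2, s1 _ _ n2', hne'.symm]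
    · intro x y hxy hc
      rcases hadj x y hxy with h | h | h | h
      · left
        refine ⟨h, ?_⟩
        have : ¬ F.Adj x y := fun k => hXT x (h2 x y h) (p1 x y k)
        simpa [suppOn_ind F x y this] using hc
      · have : ¬ S.Adj x y := fun k => hXT x (h2 x y k) (p1 x y h)
        simp [h4 x y this, ind, h] at hc
      · tauto
      · tauto

lemma cut3 {G : SimpleGraph V} (hconn : EdgeConnGe G 3) (A : Set V) (a b : V) (ha : a ∈ A)
    (hb : b ∉ A) : 3 ≤ eN G A Aᶜ := by
  by_contra hlt
  push Not at hlt
  let P : Finset (V × V) := Finset.univ.filter (fun p => p.1 ∈ A ∧ p.2 ∈ Aᶜ ∧ G.Adj p.1 p.2)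
  have hP : eN G A Aᶜ = P.card := by 
    simp only [P, Finset.card_filter, eN]
    apply Finset.sum_congr rfl
    intro p _
    congr
  let s : Finset (Sym2 V) := P.image (fun p => s(p.1, p.2))
  have hs : (s : Set (Sym2 V)).ncard < 3 := by
    rw [Set.ncard_coe_finset]
    exact lt_of_le_of_lt Finset.card_image_le (hP ▸ hlt)
  have hc := hconn.2 s hs
  have key : ∀ x y, (G.deleteEdges (s : Set (Sym2 V))).Reachable x y → x ∈ A → y ∈ A := by
    rintro x y ⟨p⟩ hx
    induction p with
    | nil => exact hx
    | cons h p ih =>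
      rename_i u' v' w'
      apply ih
      by_contra hv
      rw [SimpleGraph.deleteEdges_adj] at h
      apply h.2
      simp only [s, Finset.coe_image, Set.mem_image, Finset.mem_coe, P, Finset.mem_filter,
        Finset.mem_univ, true_and]
      exact ⟨(u', v'), ⟨hx, hv, h.1⟩, rfl⟩
  exact hb (key a b (hc.preconnected a b) ha)

def resG (G : SimpleGraph V) (Z : Set V) : SimpleGraph V where
  Adj a b := G.Adj a b ∧ a ∈ Z ∧ b ∈ Z
  symm := ⟨fun _ _ h => ⟨h.1.symm, h.2.2, h.2.1⟩⟩
  loopless := ⟨fun _ h => h.1.ne rfl⟩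

lemma resG_le (G : SimpleGraph V) (Z : Set V) : resG G Z ≤ G := fun _ _ h => h.1

lemma eN_resG (G : SimpleGraph V) (Z A B : Set V) :
    eN (resG G Z) A B = eN G (A ∩ Z) (B ∩ Z) := by
  unfold eN
  apply Finset.sum_congr rfl
  intro p _
  simp only [resG, Set.mem_inter_iff]
  congr 1
  simp only [eq_iff_iff]; tauto

lemma cubic_deg {G : SimpleGraph V} (hG : IsCubic G) (z : V) : eN G {z} Set.univ = 3 := by
  rw [eN_singleton_univ, ← hG z, ← Set.ncard_coe_finset]
  congr 1
  ext; simp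

/-- bound on the degree in a restricted graph -/
lemma deg_res {G : SimpleGraph V} (hG : IsCubic G) (Z : Set V) (z a : V) (hza : G.Adj z a)
    (ha : a ∉ Z) : eN (resG G Z) {z} Set.univ ≤ 2 := by
  have h1 := cubic_deg hG z
  rw [← Set.compl_union_self Z, eN_union_right _ _ disjoint_compl_left] at h1
  have h2 := eN_pos (F := G) (A := {z}) (B := Zᶜ) rfl ha hza
  have h3 : eN (resG G Z) {z} Set.univ ≤ eN G {z} Z := by
    rw [eN_resG]
    exact eN_mono le_rfl Set.inter_subset_left Set.inter_subset_right
  omega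

lemma exists_ear {G : SimpleGraph V} (hG : IsCubic G) (hconn : EdgeConnGe G 3) {X : Set V}
    {x₀ z₀ : V} (hx₀ : x₀ ∈ X) (hz₀ : z₀ ∉ X)
    (hone : ∀ y ∉ X, ∀ a ∈ X, ∀ b ∈ X, G.Adj y a → G.Adj y b → a = b) :
    ∃ F T a₁ a₂ y₁ y₂, Piece T F ∧ F ≤ G ∧ (∀ x ∈ X, x ∉ T) ∧ a₁ ∈ X ∧ a₂ ∈ X ∧ y₁ ∈ T ∧ y₂ ∈ T ∧
      G.Adj a₁ y₁ ∧ G.Adj a₂ y₂ ∧ y₁ ≠ y₂ := by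
  obtain ⟨Z, -, hZ⟩ := exists_minimal_le_of_wellFoundedLT
    (fun Z : Set V => Z ⊆ Xᶜ ∧ Z.Nonempty ∧ eN G Z (Xᶜ \ Z) ≤ 1) Xᶜ
    ⟨le_rfl, ⟨z₀, hz₀⟩, by simp [eN]⟩
  obtain ⟨⟨hZX, ⟨z₁, hz₁⟩, hZ1⟩, hmin⟩ := hZ
  have hminZ : ∀ P ⊆ Z, P.Nonempty → ¬ Z ⊆ P → 2 ≤ eN G P (Xᶜ \ P) := by
    intro P h1 h2 h3
    by_contra h
    exact h3 (hmin ⟨h1.trans hZX, h2, by omega⟩ h1)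
  -- cuts inside Z
  have hcutZ : ∀ A : Set V, (A ∩ Z).Nonempty → (Aᶜ ∩ Z).Nonempty →
      2 ≤ eN (resG G Z) A Aᶜ := by
    intro A hA hA'
    have h1 := hminZ (A ∩ Z) Set.inter_subset_right hA (fun h => by
      obtain ⟨x, hx, hx'⟩ := hA'; exact hx (h hx').1)
    have h2 := hminZ (Aᶜ ∩ Z) Set.inter_subset_right hA' (fun h => by
      obtain ⟨x, hx, hx'⟩ := hA; exact (h hx').1 hx)
    have e1 : Xᶜ \ (A ∩ Z) = (Aᶜ ∩ Z) ∪ (Xᶜ \ Z) := by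
      ext x
      have := @hZX x
      simp only [Set.mem_sdiff, Set.mem_union, Set.mem_inter_iff, Set.mem_compl_iff] at *
      tauto
    have e2 : Xᶜ \ (Aᶜ ∩ Z) = (A ∩ Z) ∪ (Xᶜ \ Z) := by
      ext x
      have := @hZX x
      simp only [Set.mem_sdiff, Set.mem_union, Set.mem_inter_iff, Set.mem_compl_iff] at *
      tauto
    have d1 : Disjoint (Aᶜ ∩ Z) (Xᶜ \ Z) := Set.disjoint_left.2 fun x h h' => h'.2 h.2
    have d2 : Disjoint (A ∩ Z) (Xᶜ \ Z) := Set.disjoint_left.2 fun x h h' => h'.2 h.2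
    have d3 : Disjoint (A ∩ Z) (Aᶜ ∩ Z) := Set.disjoint_left.2 fun x h h' => h'.1 h.1
    rw [e1, eN_union_right _ _ d1] at h1
    rw [e2, eN_union_right _ _ d2, eN_comm G (Aᶜ ∩ Z)] at h2
    have h3 := eN_union_left G (Xᶜ \ Z) d3
    have e3 : (A ∩ Z) ∪ (Aᶜ ∩ Z) = Z := by rw [← Set.union_inter_distrib_right]; simp
    rw [e3] at h3
    rw [eN_resG]
    omega
  -- two attachments
  have hZc : Zᶜ = X ∪ (Xᶜ \ Z) := by
    ext x
    have := @hZX x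
    simp only [Set.mem_sdiff, Set.mem_union, Set.mem_compl_iff] at *
    tauto
  have hX2 : 2 ≤ eN G Z X := by
    have h := cut3 hconn Z z₁ x₀ hz₁ (fun h => hZX h hx₀)
    have d : Disjoint X (Xᶜ \ Z) := Set.disjoint_left.2 fun x h h' => h'.1 h
    rw [hZc, eN_union_right _ _ d] at h
    omega
  obtain ⟨y₁, hy₁, a₁, ha₁, e₁⟩ := exists_of_eN_pos (le_trans one_le_two hX2)
  have hy2 : ∃ y₂ ∈ Z, ∃ a₂ ∈ X, G.Adj y₂ a₂ ∧ y₁ ≠ y₂ := by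
    by_contra hc
    push Not at hc
    have : eN G Z X ≤ ∑ p : V × V, if p = (y₁, a₁) then 1 else 0 := by
      apply Finset.sum_le_sum
      rintro ⟨y, a⟩ _
      have k1 := hc y
      have k2 := hone y₁ (hZX hy₁) a₁ ha₁ a
      simp only [Prod.mk.injEq]
      grind
    simp only [Finset.sum_ite_eq', Finset.mem_univ, if_true] at this
    omega
  obtain ⟨y₂, hy₂, a₂, ha₂, e₂, hne⟩ := hy2
  obtain ⟨F, T, hF, hP, hT1, hT2, hT⟩ := menger (resG G Z) y₁ y₂ hne
    (fun A h h' => hcutZ A ⟨y₁, h, hy₁⟩ ⟨y₂, h', hy₂⟩)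
    (deg_res hG Z y₁ a₁ e₁ (fun h => hZX h ha₁)) (deg_res hG Z y₂ a₂ e₂ (fun h => hZX h ha₂))
    (fun z => (eN_mono (resG_le G Z) le_rfl le_rfl).trans (cubic_deg hG z).le)
  refine ⟨F, T, a₁, a₂, y₁, y₂, hP, hF.trans (resG_le G Z), ?_, ha₁, ha₂, hT1, hT2, e₁.symm,
    e₂.symm, hne⟩
  intro x hx hxT
  obtain ⟨b, hb⟩ := hT x hxT
  exact hZX (hF hb).2.1 hx

lemma exists_start {G : SimpleGraph V} (hG : IsCubic G) (hconn : EdgeConnGe G 3) {u v w : V}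
    (huv : G.Adj u v) (hvw : G.Adj v w) (hne : u ≠ w) :
    ∃ F T, F ≤ G ∧ Piece T F ∧ u ∈ T ∧ w ∈ T ∧ v ∉ T ∧ ∀ a ∈ T, ∃ b, F.Adj a b := by
  have key : ∀ A : Set V, v ∉ A → A.Nonempty → eN G {v} A ≤ 1 →
      2 ≤ eN (resG G {v}ᶜ) A Aᶜ := by
    rintro A hv ⟨a, ha⟩ h1
    have h := cut3 hconn A a v ha hv
    have e : Aᶜ = (Aᶜ ∩ {v}ᶜ) ∪ {v} := by
      ext x
      by_cases hx : x = v
      · subst hx; simpa using hv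
      · simp [hx]
    have e' : A ∩ {v}ᶜ = A := by
      ext x
      by_cases hx : x = v
      · subst hx; simpa using hv
      · simp [hx]
    have d : Disjoint (Aᶜ ∩ {v}ᶜ) {v} := Set.disjoint_left.2 fun x h h' => h.2 h'
    rw [e, eN_union_right _ _ d, eN_comm G A {v}] at h
    rw [eN_resG, e']
    omega
  have hcut : ∀ A : Set V, u ∈ A → w ∉ A → 2 ≤ eN (resG G {v}ᶜ) A Aᶜ := by
    intro A hu hw
    have hd := cubic_deg hG v
    have hs : eN G {v} (A \ {v}) + eN G {v} (Aᶜ \ {v}) ≤ 3 := by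
      rw [← eN_union_right, ← hd]
      · exact eN_mono le_rfl le_rfl (Set.subset_univ _)
      · exact Set.disjoint_left.2 fun x h h' => h'.1 h.1
    have hor : eN G {v} (A \ {v}) ≤ 1 ∨ eN G {v} (Aᶜ \ {v}) ≤ 1 := by omega
    rcases hor with h | h
    · have := key (A \ {v}) (by simp) ⟨u, hu, huv.ne⟩ h
      rw [eN_resG] at this ⊢
      exact this.trans (eN_mono le_rfl (fun x hx => ⟨hx.1.1, hx.2⟩)
        (fun x hx => ⟨fun h => hx.1 ⟨h, hx.2⟩, hx.2⟩))
    · have := key (Aᶜ \ {v}) (by simp) ⟨w, hw, hvw.ne'⟩ h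
      rw [eN_comm, eN_resG] at this
      rw [eN_resG]
      refine this.trans (eN_mono le_rfl (fun x hx => ⟨?_, hx.2⟩) (fun x hx => ⟨hx.1.1, hx.2⟩))
      by_contra h
      exact hx.1 ⟨h, hx.2⟩
  obtain ⟨F, T, hF, hP, hT1, hT2, hT⟩ := menger (resG G {v}ᶜ) u w hne hcut
    (deg_res hG _ u v huv (by simp)) (deg_res hG _ w v hvw.symm (by simp))
    (fun z => (eN_mono (resG_le G _) le_rfl le_rfl).trans (cubic_deg hG z).le)
  refine ⟨F, T, hF.trans (resG_le G _), hP, hT1, hT2, ?_, hT⟩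
  intro h
  obtain ⟨b, hb⟩ := hT v h
  exact (hF hb).2.1 rfl

def FInv (G : SimpleGraph V) (u v w : V) (p : Set V × SimpleGraph V) : Prop :=
  ∃ c, Good G p.1 p.2 c ∧ u ∈ p.1 ∧ v ∈ p.1 ∧ w ∈ p.1 ∧ (∀ n, c s(v, n) = 0) ∧
    (∃ n, c s(u, n) ≠ 0) ∧ ∃ n, c s(w, n) ≠ 0

lemma exists_full {G : SimpleGraph V} (hG : IsCubic G) (hconn : EdgeConnGe G 3) {u v w : V}
    (huv : G.Adj u v) (hvw : G.Adj v w) (hne : u ≠ w) : FInv G u v w (Set.univ, G) := by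
  have hstart : ∃ p, FInv G u v w p := by
    obtain ⟨F, T, hF, hP, hu, hw, hv, hT⟩ := exists_start hG hconn huv hvw hne
    obtain ⟨S', hS', -⟩ := step2 (hP.good hF) (piece_singleton v) bot_le
      (fun x hx (h : x = v) => hv (h ▸ hx)) hu hw rfl rfl huv hvw.symm (Or.inl hne)
    have hind : ∀ e : Sym2 V, ind (⊥ : SimpleGraph V) e = 0 := fun e => by simp [ind]
    refine ⟨(_, S'), _, hS', Or.inl hu, Or.inr rfl, Or.inl hw, ?_, ?_, ?_⟩
    · intro n
      have : ¬ F.Adj v n := fun h => hv (hP.1 _ _ h)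
      simp [hind, suppOn_ind F v n this]
    · obtain ⟨n, hn⟩ := hT u hu
      exact ⟨n, by rw [Pi.add_apply, hind]; simp [ind, hn]⟩
    · obtain ⟨n, hn⟩ := hT w hw
      exact ⟨n, by rw [Pi.add_apply, hind]; simp [ind, hn]⟩
  obtain ⟨p₀, hp₀⟩ := hstart
  obtain ⟨⟨X, S⟩, -, ⟨c, hgood, hu, hv, hw, hcv, ⟨nu, hcu⟩, ⟨nw, hcw⟩⟩, hmax⟩ :=
    exists_maximal_ge_of_wellFoundedGT (FInv G u v w) p₀ hp₀
  simp only at hgood hu hv hw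
  have hfull : ∀ a ∈ X, ∀ b ∈ X, G.Adj a b → S.Adj a b := by
    intro a ha b hb hab
    by_contra hS
    have h1 := step1 hgood ha hb hab hS
    have h2 := hmax (y := (X, S ⊔ SimpleGraph.edge a b))
      ⟨c, h1, hu, hv, hw, hcv, ⟨nu, hcu⟩, ⟨nw, hcw⟩⟩ ⟨le_rfl, le_sup_left⟩
    apply hS
    apply h2.2
    rw [SimpleGraph.sup_adj, SimpleGraph.edge_adj]
    simp [hab.ne]
  have hstep : ∀ (F : SimpleGraph V) (T : Set V) (a₁ a₂ y₁ y₂ : V), Piece T F → F ≤ G →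
      (∀ x ∈ X, x ∉ T) → a₁ ∈ X → a₂ ∈ X → y₁ ∈ T → y₂ ∈ T →
      G.Adj a₁ y₁ → G.Adj a₂ y₂ → (a₁ ≠ a₂ ∨ y₁ ≠ y₂) → False := by
    intro F T a₁ a₂ y₁ y₂ hP hF hXT ha₁ ha₂ hy₁ hy₂ e₁ e₂ hn
    obtain ⟨S', hS', hSS⟩ := step2 hgood hP hF hXT ha₁ ha₂ hy₁ hy₂ e₁ e₂ hn
    have hind : ∀ x ∈ X, ∀ n, ind F s(x, n) = 0 := fun x hx n =>
      suppOn_ind F x n (fun h => hXT x hx (hP.1 _ _ h))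
    have h2 := hmax (y := (X ∪ T, S'))
      ⟨_, hS', Or.inl hu, Or.inl hv, Or.inl hw, fun n => by simp [hind v hv, hcv],
        ⟨nu, by simpa [hind u hu] using hcu⟩, ⟨nw, by simpa [hind w hw] using hcw⟩⟩
      ⟨Set.subset_union_left, hSS⟩
    exact hXT y₁ (h2.1 (Or.inr hy₁)) hy₁
  have hXu : ∀ x, x ∈ X := by
    by_contra hc
    push Not at hc
    obtain ⟨z₀, hz₀⟩ := hc
    obtain ⟨F, T, a₁, a₂, y₁, y₂, h1, h2, h3, h4, h5, h6, h7, h8, h9, h10⟩ :=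
      exists_ear hG hconn hu hz₀ (by
        intro y hy a ha b hb hya hyb
        by_contra hab
        exact hstep ⊥ {y} a b y y (piece_singleton y) bot_le (fun x hx (h : x = y) => hy (h ▸ hx))
          ha hb rfl rfl hya.symm hyb.symm (Or.inl hab))
    exact hstep F T a₁ a₂ y₁ y₂ h1 h2 h3 h4 h5 h6 h7 h8 h9 (Or.inr h10)
  have hXe : X = Set.univ := Set.eq_univ_of_forall hXu
  have hSe : S = G := le_antisymm hgood.1 (fun a b h => hfull a (hXu a) b (hXu b) h)
  subst hXe
  subst hSe
  exact ⟨c, hgood, hu, hv, hw, hcv, ⟨nu, hcu⟩, ⟨nw, hcw⟩⟩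

lemma nbrs {G : SimpleGraph V} (hG : IsCubic G) (u v : V) (h : G.Adj u v) :
    ∃ p q, v ≠ p ∧ v ≠ q ∧ p ≠ q ∧ ∀ y, G.Adj u y ↔ y = v ∨ y = p ∨ y = q := by
  obtain ⟨a, b, c, hab, hac, hbc, hs⟩ := Set.ncard_eq_three.1 (hG u)
  have hm : ∀ y, G.Adj u y ↔ y = a ∨ y = b ∨ y = c := by
    intro y
    rw [← SimpleGraph.mem_neighborSet, hs]
    simp
  rcases (hm v).1 h with rfl | rfl | rfl
  · exact ⟨b, c, hab, hac, hbc, hm⟩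
  · exact ⟨a, c, hab.symm, hbc, hac, fun y => by rw [hm]; tauto⟩
  · exact ⟨a, b, hac.symm, hbc.symm, hab, fun y => by rw [hm]; tauto⟩

lemma colorSet_eq {G : SimpleGraph V} {C : Type*} (θ : Sym2 V → C) {u a b c : V}
    (h : ∀ y, G.Adj u y ↔ y = a ∨ y = b ∨ y = c) :
    colorSet G θ u = {θ s(u, a), θ s(u, b), θ s(u, c)} := by
  ext t
  simp only [colorSet, Set.mem_image, Set.mem_insert_iff, Set.mem_singleton_iff]
  constructor
  · rintro ⟨e, he, rfl⟩
    obtain ⟨he1, he2⟩ := he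
    obtain ⟨y, rfl⟩ := he2
    rcases (h y).1 he1 with rfl | rfl | rfl <;> simp
  · have hi : ∀ y, G.Adj u y → s(u, y) ∈ G.incidenceSet u := fun y hy => ⟨hy, by simp⟩
    rintro (rfl | rfl | rfl)
    · exact ⟨_, hi a ((h a).2 (by simp)), rfl⟩
    · exact ⟨_, hi b ((h b).2 (by simp)), rfl⟩
    · exact ⟨_, hi c ((h c).2 (by simp)), rfl⟩

lemma bdry_eq {M : Type*} [AddCommMonoid M] {G : SimpleGraph V} (θ : Sym2 V → M) (hs : SuppOn G θ)
    {u a b c : V} (hab : a ≠ b) (hac : a ≠ c) (hbc : b ≠ c)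
    (h : ∀ y, G.Adj u y ↔ y = a ∨ y = b ∨ y = c) :
    bdry θ u = θ s(u, a) + θ s(u, b) + θ s(u, c) := by
  have : bdry θ u = ∑ y ∈ ({a, b, c} : Finset V), θ s(u, y) := by
    symm
    apply Finset.sum_subset (Finset.subset_univ _)
    intro y _ hy
    apply hs
    rw [h]
    simpa using hy
  rw [this, Finset.sum_insert (by simp [hab, hac]), Finset.sum_insert (by simp [hbc]),
    Finset.sum_singleton, add_assoc]

lemma rich_of {G : SimpleGraph V} (hG : IsCubic G) (θ : Sym2 V → K8) (hs : SuppOn G θ)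
    (hb : ∀ x, bdry θ x = 0) (hnz : ∀ a b, G.Adj a b → θ s(a, b) ≠ 0) {u v : V} (huv : G.Adj u v)
    (hv : ∀ n, (θ s(v, n)).1 = 0) (hu : ∃ n, (θ s(u, n)).1 ≠ 0) : IsRichAt G θ u v := by
  obtain ⟨p, q, h1, h2, h3, h4⟩ := nbrs hG u v huv
  obtain ⟨r, t, k1, k2, k3, k4⟩ := nbrs hG v u huv.symm
  have b1 := hb u
  have b2 := hb v
  rw [bdry_eq θ hs h1 h2 h3 h4] at b1
  rw [bdry_eq θ hs k1 k2 k3 k4, Sym2.eq_swap (a := v) (b := u)] at b2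
  have hα : (θ s(u, v)).1 = 0 := by rw [Sym2.eq_swap]; exact hv u
  unfold IsRichAt
  rw [colorSet_eq θ h4, colorSet_eq θ k4, Sym2.eq_swap (a := v) (b := u)]
  refine card5 (θ s(u, v)) (θ s(u, p)) (θ s(u, q)) (θ s(v, r)) (θ s(v, t)) hα ?_ (hv r)
    (hnz _ _ huv) (hnz _ _ ((k4 r).2 (by simp))) (hnz _ _ ((k4 t).2 (by simp))) b1 b2
  · obtain ⟨n, hn⟩ := hu
    by_cases hun : G.Adj u n
    · rcases (h4 n).1 hun with rfl | rfl | rfl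
      · exact absurd hα hn
      · exact Or.inl hn
      · exact Or.inr hn
    · rw [hs u n hun] at hn
      exact absurd rfl hn

lemma finsum_eq_bdry {M : Type*} [AddCommMonoid M] {G : SimpleGraph V} (θ : Sym2 V → M)
    (hs : SuppOn G θ) (x : V) : ∑ᶠ e ∈ G.incidenceSet x, θ e = bdry θ x := by
  have h1 : G.incidenceSet x = (fun y => s(x, y)) '' (G.neighborSet x) := by
    ext e
    constructor
    · rintro ⟨h1, ⟨y, rfl⟩⟩
      exact ⟨y, h1, rfl⟩
    · rintro ⟨y, hy, rfl⟩
      exact ⟨hy, by simp⟩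
  rw [h1, finsum_mem_image (fun a _ b _ h => Sym2.congr_right.1 h), finsum_mem_def,
    finsum_eq_sum_of_fintype]
  apply Finset.sum_congr rfl
  intro y _
  by_cases h : G.Adj x y
  · simp [h]
  · simp [h, hs x y h]

lemma main_aux {G : SimpleGraph V} (hG : IsCubic G) (hconn : EdgeConnGe G 3) {u v w : V}
    (huv : G.Adj u v) (hvw : G.Adj v w) (hne : u ≠ w) :
    ∃ θ : Sym2 V → K8, IsNowhereZeroFlow G θ ∧ IsRichAt G θ u v ∧ IsRichAt G θ v w := by
  obtain ⟨c, ⟨-, -, -, h4, h5, h6⟩, -, -, -, hcv, hcu, hcw⟩ := exists_full hG hconn huv hvw hne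
  simp only at h4 h6
  obtain ⟨ψ, p1, p2, p3⟩ := h6 0
  have hs : SuppOn G (fun e => ((c e, ψ e) : K8)) := fun a b h => by
    simp only [h4 a b h, p1 a b h]; rfl
  have hb : ∀ x, bdry (fun e => ((c e, ψ e) : K8)) x = 0 := by
    intro x
    have q1 := h5 x
    have q2 := p2 x
    simp only [bdry] at q1 q2 ⊢
    apply Prod.ext
    · rw [Prod.fst_sum]; exact q1
    · rw [Prod.snd_sum]; exact q2
  have hnz : ∀ a b, G.Adj a b → (fun e => ((c e, ψ e) : K8)) s(a, b) ≠ 0 := by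
    intro a b hab h
    exact p3 a b hab (congrArg Prod.fst h) (congrArg Prod.snd h)
  refine ⟨fun e => (c e, ψ e), ⟨?_, ?_⟩, rich_of hG _ hs hb hnz huv hcv hcu, ?_⟩
  · intro e
    induction e with
    | h a b => exact fun h => hnz a b h
  · intro x
    rw [finsum_eq_bdry _ hs, hb]
  · have := rich_of hG _ hs hb hnz hvw.symm hcv hcw
    unfold IsRichAt at *
    rwa [Set.union_comm]

end Aux

theorem stmt_11 {V : Type*} [Fintype V] (G : SimpleGraph V)
    (hG : IsCubic G) (hconn : EdgeConnGe G 3)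
    (u v w : V) (huv : G.Adj u v) (hvw : G.Adj v w) (hne : s(u, v) ≠ s(v, w)) :
    ∃ θ : Sym2 V → ZMod 2 × ZMod 2 × ZMod 2,
      IsNowhereZeroFlow G θ ∧ IsRichAt G θ u v ∧ IsRichAt G θ v w := by
  refine main_aux hG hconn huv hvw ?_
  rintro rfl
  exact hne Sym2.eq_swap
end

section
/- Let G be a finite simple cubic graph that is 3-edge-connected, and let e be an edge of G. Then G admits a nowhere-zero Z_2^3-flow θ such that e is rich with respect to θ. -/
open SimpleGraph

section Flow8

open Finset Classical

inductive RP {V : Type*} (r : V → V → Prop) (x : V) : V → List V → Prop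
  | base : RP r x x [x]
  | step (w z : V) (l : List V) : RP r x w l → r w z → z ∉ l → RP r x z (z :: l)

lemma RP.mem {V : Type*} {r : V → V → Prop} {x z : V} {l : List V} (h : RP r x z l) : z ∈ l := by
  cases h <;> simp

lemma RP.sub {V : Type*} {r : V → V → Prop} {x w : V} {l : List V} (h : RP r x w l) :
    ∀ z ∈ l, ∃ l', RP r x z l' := by
  induction h with
  | base => intro z hz; simp at hz; subst hz; exact ⟨_, RP.base⟩
  | step w z l h1 h2 h3 ih =>
    intro t ht
    rcases List.mem_cons.1 ht with rfl | ht
    · exact ⟨_, RP.step w t l h1 h2 h3⟩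
    · exact ih t ht

lemma RP.ext' {V : Type*} {r : V → V → Prop} {x w z : V} {l : List V} (h : RP r x w l)
    (hr : r w z) : ∃ l', RP r x z l' := by
  by_cases hz : z ∈ l
  · exact h.sub z hz
  · exact ⟨_, RP.step w z l h hr hz⟩

structure IsF {V : Type*} (G : SimpleGraph V) (X : Finset V) (g : V → V → ℤ) : Prop where
  anti : ∀ p q, g q p = - g p q
  le : ∀ p q, g p q ≤ 1
  supp : ∀ p q, g p q ≠ 0 → G.Adj p q ∧ p ∈ X ∧ q ∈ X

def Res {V : Type*} (G : SimpleGraph V) (X : Finset V) (g : V → V → ℤ) (p q : V) : Prop :=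
  G.Adj p q ∧ p ∈ X ∧ q ∈ X ∧ g p q ≤ 0

lemma augment {V : Type*} [Fintype V] (G : SimpleGraph V) (X : Finset V) (r : V → V → Prop)
    (x z : V) (l : List V) (h : RP r x z l) :
    ∀ g, IsF G X g → (∀ p ∈ l, ∀ q ∈ l, r p q → Res G X g p q) →
    ∃ g', IsF G X g' ∧ ∀ p, ∑ q, g' p q =
      ∑ q, g p q + (if p = x then 1 else 0) - (if p = z then 1 else 0) := by
  induction h with
  | base => intro g hg _; exact ⟨g, hg, fun p => by ring⟩
  | step w z l h1 h2 h3 ih =>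
    intro g hg hr
    obtain ⟨hadj, hwX, hzX, hle⟩ := hr w (by simp [h1.mem]) z (by simp) h2
    have hwz : w ≠ z := hadj.ne
    let g1 : V → V → ℤ := fun p q => g p q + (if p = w ∧ q = z then 1 else 0)
      - (if p = z ∧ q = w then 1 else 0)
    have hg1 : IsF G X g1 := by
      refine ⟨fun p q => ?_, fun p q => ?_, fun p q hpq => ?_⟩
      · simp only [g1, hg.anti p q, and_comm (a := q = w), and_comm (a := q = z)]; ring
      · have := hg.le p q
        simp only [g1]
        split_ifs with a b b
        · lia
        · obtain ⟨rfl, rfl⟩ := a; lia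
        · lia
        · lia
      · by_cases a : p = w ∧ q = z
        · obtain ⟨rfl, rfl⟩ := a; exact ⟨hadj, hwX, hzX⟩
        by_cases b : p = z ∧ q = w
        · obtain ⟨rfl, rfl⟩ := b; exact ⟨hadj.symm, hzX, hwX⟩
        exact hg.supp p q (by simpa [g1, a, b] using hpq)
    obtain ⟨g', hg', hd⟩ := ih g1 hg1 (by
      intro p hp q hq hpq
      have h5 := hr p (by simp [hp]) q (by simp [hq]) hpq
      have hpz : p ≠ z := fun h => h3 (h ▸ hp)
      have hqz : q ≠ z := fun h => h3 (h ▸ hq)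
      have : g1 p q = g p q := by simp [g1, hpz, hqz]
      unfold Res at *
      rw [this]; exact h5)
    refine ⟨g', hg', fun p => ?_⟩
    rw [hd p]
    have : ∑ q, g1 p q = ∑ q, g p q + (if p = w then 1 else 0) - (if p = z then 1 else 0) := by
      simp only [g1, Finset.sum_add_distrib, Finset.sum_sub_distrib, ite_and]
      by_cases a : p = w <;> by_cases b : p = z <;> simp [a, b]
    rw [this]; ring

lemma sum_anti {V : Type*} (R : Finset V) (g : V → V → ℤ) (h : ∀ p q, g q p = - g p q) :
    ∑ p ∈ R, ∑ q ∈ R, g p q = 0 := by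
  have h1 : ∑ p ∈ R, ∑ q ∈ R, g p q = ∑ p ∈ R, ∑ q ∈ R, g q p := Finset.sum_comm
  have h2 : ∑ p ∈ R, ∑ q ∈ R, g q p = - ∑ p ∈ R, ∑ q ∈ R, g p q := by
    simp only [← Finset.sum_neg_distrib]
    exact Finset.sum_congr rfl fun p _ => Finset.sum_congr rfl fun q _ => h p q
  lia

lemma sum_cut {V : Type*} [Fintype V] (R : Finset V) (g : V → V → ℤ)
    (h : ∀ p q, g q p = - g p q) :
    ∑ p ∈ R, ∑ q, g p q = ∑ p ∈ R, ∑ q ∈ Rᶜ, g p q := by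
  have : ∀ p, ∑ q, g p q = ∑ q ∈ R, g p q + ∑ q ∈ Rᶜ, g p q := fun p =>
    (Finset.sum_add_sum_compl R _).symm
  simp only [this, Finset.sum_add_distrib, sum_anti R g h, zero_add]

lemma incr {V : Type*} [Fintype V] (G : SimpleGraph V) (X : Finset V) (x y : V)
    (hx : x ∈ X)
    (cut : ∀ A ⊆ X, x ∈ A → y ∉ A → 2 ≤ #{e ∈ A ×ˢ (X \ A) | G.Adj e.1 e.2})
    (k : ℤ) (hk : k ≤ 1) (g : V → V → ℤ) (hg : IsF G X g)
    (hd : ∀ p, ∑ q, g p q = k * ((if p = x then 1 else 0) - (if p = y then 1 else 0))) :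
    ∃ g', IsF G X g' ∧ 
      ∀ p, ∑ q, g' p q = (k + 1) * ((if p = x then 1 else 0) - (if p = y then 1 else 0)) := by
  by_cases hyR : ∃ l, RP (Res G X g) x y l
  · obtain ⟨l, hl⟩ := hyR
    obtain ⟨g', h1, h2⟩ := augment G X _ x y l hl g hg (fun _ _ _ _ h => h)
    exact ⟨g', h1, fun p => by rw [h2, hd]; ring⟩
  exfalso
  let R : Finset V := {p ∈ X | ∃ l, RP (Res G X g) x p l}
  have hxR : x ∈ R := by simp only [R, Finset.mem_filter]; exact ⟨hx, _, RP.base⟩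
  have hyR' : y ∉ R := by simp only [R, Finset.mem_filter]; exact fun h => hyR h.2
  have h2 := cut R (Finset.filter_subset _ _) hxR hyR'
  have e1 : ∑ p ∈ R, ∑ q, g p q = k := by
    simp only [hd, ← Finset.mul_sum, Finset.sum_sub_distrib, Finset.sum_ite_eq', hxR, hyR']
    simp
  have e2 : ∑ p ∈ R, ∑ q ∈ Rᶜ, g p q = #{e ∈ R ×ˢ (X \ R) | G.Adj e.1 e.2} := by
    rw [Finset.card_filter, Finset.sum_product]
    push_cast
    refine Finset.sum_congr rfl fun p hp => ?_
    have hsub : X \ R ⊆ Rᶜ := fun q hq => by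
      simp only [Finset.mem_sdiff, Finset.mem_compl] at *; exact hq.2
    rw [← Finset.sum_subset hsub]
    · refine Finset.sum_congr rfl fun q hq => ?_
      have hq' := Finset.mem_sdiff.1 hq
      have hp' := (Finset.mem_filter.1 hp)
      obtain ⟨l, hl⟩ := hp'.2
      split_ifs with ha
      · have h3 := hg.le p q
        by_contra h4
        exact hq'.2 (Finset.mem_filter.2 ⟨hq'.1, hl.ext' ⟨ha, hp'.1, hq'.1, by lia⟩⟩)
      · by_contra h4; exact ha (hg.supp p q h4).1
    · intro q hq hq2
      by_contra h4
      have := (hg.supp p q h4).2.2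
      simp only [Finset.mem_sdiff, Finset.mem_compl] at *
      exact hq2 ⟨this, hq⟩
  rw [sum_cut R g hg.anti, e2] at e1
  lia

lemma twoflow {V : Type*} [Fintype V] (G : SimpleGraph V) (X : Finset V) (x y : V)
    (hx : x ∈ X)
    (cut : ∀ A ⊆ X, x ∈ A → y ∉ A → 2 ≤ #{e ∈ A ×ˢ (X \ A) | G.Adj e.1 e.2}) :
    ∃ K ⊆ X, x ∈ K ∧ y ∈ K ∧ ∃ B : V → V → ZMod 2, (∀ p q, B p q = B q p) ∧
      (∀ p q, B p q ≠ 0 → G.Adj p q ∧ p ∈ K ∧ q ∈ K) ∧ (∀ p, ∑ q, B p q = 0) ∧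
      ∀ p ∈ K, Relation.ReflTransGen (fun p q => B p q ≠ 0) x p := by
  obtain ⟨g1, hg1, hd1⟩ := incr G X x y hx cut 0 (by norm_num) (fun _ _ => 0)
    ⟨by simp, by simp, by simp⟩ (by simp)
  obtain ⟨g, hg, hd⟩ := incr G X x y hx cut _ (by norm_num) g1 hg1 hd1
  let K : Finset V := {p ∈ X | Relation.ReflTransGen (fun p q => g p q ≠ 0) x p}
  have hxK : x ∈ K := Finset.mem_filter.2 ⟨hx, Relation.ReflTransGen.refl⟩
  have hcl : ∀ p ∈ K, ∀ q, g p q ≠ 0 → q ∈ K := fun p hp q hpq =>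
    Finset.mem_filter.2 ⟨(hg.supp p q hpq).2.2, (Finset.mem_filter.1 hp).2.tail hpq⟩
  have hodd : ∀ p q, g p q ≠ 0 → ((g p q : ℤ) : ZMod 2) ≠ 0 := by
    intro p q h
    have h1 := hg.le p q
    have h2 := hg.le q p
    have h3 := hg.anti p q
    have : g p q = 1 ∨ g p q = -1 := by lia
    rcases this with h | h <;> rw [h] <;> decide
  have hneg : ∀ a : ZMod 2, -a = a := by decide
  refine ⟨K, Finset.filter_subset _ _, hxK, ?_,
    fun p q => if p ∈ K ∧ q ∈ K then ((g p q : ℤ) : ZMod 2) else 0, ?_, ?_, ?_, ?_⟩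
  · by_contra hyK
    have e1 : ∑ p ∈ K, ∑ q, g p q = 2 := by
      simp only [hd, ← Finset.mul_sum, Finset.sum_sub_distrib, Finset.sum_ite_eq', hxK, hyK]
      simp
    rw [sum_cut K g hg.anti] at e1
    rw [Finset.sum_eq_zero] at e1
    · norm_num at e1
    · intro p hp
      refine Finset.sum_eq_zero fun q hq => ?_
      by_contra h
      exact (Finset.mem_compl.1 hq) (hcl p hp q h)
  · intro p q
    simp only [and_comm (a := q ∈ K), hg.anti p q]
    push_cast
    rw [hneg]
  · intro p q h
    by_cases hh : p ∈ K ∧ q ∈ K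
    · refine ⟨(hg.supp p q ?_).1, hh⟩
      intro h0; simp [h0] at h
    · simp [hh] at h
  · intro p
    by_cases hp : p ∈ K
    · have : ∀ q, (if p ∈ K ∧ q ∈ K then ((g p q : ℤ) : ZMod 2) else 0) = ((g p q : ℤ) : ZMod 2) := by
        intro q
        by_cases hq : q ∈ K
        · simp [hp, hq]
        · have : g p q = 0 := by by_contra h; exact hq (hcl p hp q h)
          simp [this]
      simp only [this]
      rw [← Int.cast_sum, hd]
      push_cast
      have : (2 : ZMod 2) = 0 := by decide
      simp [this]
    · simp [hp]
  · intro p hp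
    have h := (Finset.mem_filter.1 hp).2
    clear hp
    have : p ∈ K ∧ Relation.ReflTransGen (fun p q => (if p ∈ K ∧ q ∈ K then ((g p q : ℤ) : ZMod 2) else 0) ≠ 0) x p := by
      induction h with
      | refl => exact ⟨hxK, Relation.ReflTransGen.refl⟩
      | tail h1 h2 ih =>
        have h3 := hcl _ ih.1 _ h2
        refine ⟨h3, ih.2.tail ?_⟩
        simp only [ih.1, h3, and_self, if_true]
        exact hodd _ _ h2
    exact this.2

lemma transport {V M : Type*} [Fintype V] [AddCommGroup M] (h2 : ∀ m : M, m + m = 0)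
    (r : V → V → Prop) (hs : ∀ p q, r p q → r q p) (hi : ∀ p q, r p q → p ≠ q) (x : V) (d : V → M)
    (hc : ∀ p, d p ≠ 0 → Relation.ReflTransGen r x p) (hd : ∑ p, d p = 0) :
    ∃ φ : V → V → M, (∀ p q, φ p q = φ q p) ∧ (∀ p q, φ p q ≠ 0 → r p q) ∧
      ∀ p, ∑ q, φ p q = d p := by
  have key : ∀ (m : M) (p : V), Relation.ReflTransGen r x p → ∃ φ : V → V → M,
      (∀ p q, φ p q = φ q p) ∧ (∀ p q, φ p q ≠ 0 → r p q) ∧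
      ∀ t, ∑ q, φ t q = (if t = x then m else 0) + (if t = p then m else 0) := by
    intro m p hp
    induction hp with
    | refl =>
      refine ⟨fun _ _ => 0, by simp, by simp, fun t => ?_⟩
      by_cases ht : t = x <;> simp [ht, h2]
    | @tail b c _ hbc ih =>
      obtain ⟨φ, a1, a2, a3⟩ := ih
      have hne := hi _ _ hbc
      refine ⟨fun p q => φ p q + ((if p = b ∧ q = c then m else 0) +
        (if p = c ∧ q = b then m else 0)), fun p q => ?_, fun p q h => ?_, fun t => ?_⟩
      · change φ p q + _ = φ q p + _
        rw [a1 p q, add_comm (if p = b ∧ q = c then m else 0)]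
        simp only [and_comm]
      · by_cases u1 : p = b ∧ q = c
        · rw [u1.1, u1.2]; exact hbc
        by_cases u2 : p = c ∧ q = b
        · rw [u2.1, u2.2]; exact hs _ _ hbc
        exact a2 p q (by simpa [u1, u2] using h)
      · simp only [Finset.sum_add_distrib, a3, ite_and]
        by_cases u1 : t = b
        · subst u1; simp [hne, add_assoc, h2]
        · by_cases u2 : t = c
          · subst u2; simp [u1]
          · simp [u1, u2]
  have key2 : ∀ p : V, ∃ φ : V → V → M,
      (∀ p q, φ p q = φ q p) ∧ (∀ p q, φ p q ≠ 0 → r p q) ∧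
      ∀ t, ∑ q, φ t q = (if t = x then d p else 0) + (if t = p then d p else 0) := by
    intro p
    by_cases hp : d p = 0
    · exact ⟨fun _ _ => 0, by simp, by simp, by simp [hp]⟩
    · exact key _ p (hc p hp)
  choose ψ b1 b2 b3 using key2
  refine ⟨fun p q => ∑ t, ψ t p q, fun p q => Finset.sum_congr rfl fun t _ => b1 t p q,
    fun p q h => ?_, fun p => ?_⟩
  · obtain ⟨t, _, ht⟩ := Finset.exists_ne_zero_of_sum_ne_zero h
    exact b2 t p q ht
  · rw [Finset.sum_comm]
    simp only [b3, Finset.sum_add_distrib]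
    by_cases hp : p = x <;> simp [hp, hd]

lemma choose_vals {α : Type*} (S : Finset α) (hS : 2 ≤ #S) (s : ZMod 2 × ZMod 2) :
    ∃ c : α → ZMod 2 × ZMod 2, (∀ a ∈ S, c a ≠ 0) ∧ (∀ a ∉ S, c a = 0) ∧ ∑ a ∈ S, c a = s := by
  obtain ⟨a, ha, b, hb, hab⟩ := Finset.one_lt_card.1 hS
  let T := (S.erase a).erase b
  have hch : ∀ t : ZMod 2 × ZMod 2, ∃ y, y ≠ 0 ∧ t - y ≠ 0 := by decide
  obtain ⟨y, hy, hy2⟩ := hch (s - ∑ _t ∈ T, (1, 1))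
  refine ⟨fun t => if t = a then y else if t = b then s - ∑ _t ∈ T, (1, 1) - y else
    if t ∈ S then (1, 1) else 0, ?_, ?_, ?_⟩
  · intro t ht
    by_cases h1 : t = a
    · simpa [h1] using hy
    by_cases h3 : t = b
    · simp only [h3, hab.symm, if_true, if_false]; exact hy2
    simp only [h1, h3, ht, if_true, if_false]; decide
  · intro t ht
    have h1 : t ≠ a := fun h => ht (h ▸ ha)
    have h3 : t ≠ b := fun h => ht (h ▸ hb)
    simp [h1, h3, ht]
  · rw [← Finset.add_sum_erase S _ ha, ← Finset.add_sum_erase (S.erase a) _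
      (Finset.mem_erase.2 ⟨hab.symm, hb⟩)]
    have : ∑ t ∈ (S.erase a).erase b, (if t = a then y else if t = b then s - ∑ _t ∈ T, (1, 1) - y else
      if t ∈ S then (1, 1) else 0) = ∑ _t ∈ T, ((1, 1) : ZMod 2 × ZMod 2) := by
      refine Finset.sum_congr rfl fun t ht => ?_
      replace ht : t ∈ (S.erase a).erase b := ht
      simp only [Finset.mem_erase] at ht
      simp [ht.1, ht.2.1, ht.2.2]
    rw [this]
    simp only [hab.symm, if_true, if_false]
    abel

structure Good_s12 {V : Type*} [Fintype V] (G : SimpleGraph V) (H : Finset V)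
    (A : V → V → ZMod 2) : Prop where
  symm : ∀ p q, A p q = A q p
  supp : ∀ p q, A p q ≠ 0 → G.Adj p q ∧ p ∈ H ∧ q ∈ H
  even : ∀ p, ∑ q, A p q = 0
  flow : ∀ d : V → ZMod 2 × ZMod 2, (∀ p ∉ H, d p = 0) → ∑ p, d p = 0 →
    ∃ φ : V → V → ZMod 2 × ZMod 2, (∀ p q, φ p q = φ q p) ∧
      (∀ p q, φ p q ≠ 0 → G.Adj p q ∧ p ∈ H ∧ q ∈ H) ∧ (∀ p, ∑ q, φ p q = d p) ∧
      ∀ p q, p ∈ H → q ∈ H → G.Adj p q → A p q = 0 → φ p q ≠ 0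

structure ExtK {V : Type*} [Fintype V] (G : SimpleGraph V) (H K : Finset V) (x : V)
    (B : V → V → ZMod 2) : Prop where
  symm : ∀ p q, B p q = B q p
  supp : ∀ p q, B p q ≠ 0 → G.Adj p q ∧ p ∈ K ∧ q ∈ K
  even : ∀ p, ∑ q, B p q = 0
  conn : ∀ p ∈ K, Relation.ReflTransGen (fun p q => B p q ≠ 0) x p
  disj : ∀ p ∈ K, p ∉ H
  mem : x ∈ K
  two : 2 ≤ #{e ∈ K ×ˢ H | G.Adj e.1 e.2}

lemma sum_symm {V : Type*} [Fintype V] (κ : V → V → ZMod 2 × ZMod 2)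
    (hs : ∀ p q, κ p q = κ q p) (h0 : ∀ p, κ p p = 0) : ∑ p, ∑ q, κ p q = 0 := by
  have h2 : ∀ m : ZMod 2 × ZMod 2, m + m = 0 := by decide
  rw [← Finset.sum_product']
  refine Finset.sum_involution (fun a _ => (a.2, a.1)) ?_ ?_ ?_ ?_
  · rintro ⟨p, q⟩ _; simp only; rw [hs q p]; exact h2 _
  · rintro ⟨p, q⟩ _ h he
    simp only [Prod.mk.injEq] at he
    apply h; simp only [he.1]; exact h0 _
  · simp
  · simp

lemma Good_s12.ext {V : Type*} [Fintype V] {G : SimpleGraph V} {H K : Finset V} {x : V}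
    {A B : V → V → ZMod 2} (hA : Good_s12 G H A) (hB : ExtK G H K x B) :
    Good_s12 G (H ∪ K) (fun p q => A p q + B p q) := by
  have h2 : ∀ m : ZMod 2 × ZMod 2, m + m = 0 := by decide
  have hneg : ∀ m : ZMod 2 × ZMod 2, -m = m := by decide
  have hAK : ∀ p q, p ∈ K → A p q = 0 := fun p q hp => by
    by_contra h; exact hB.disj p hp (hA.supp p q h).2.1
  have hBH : ∀ p q, p ∈ H → B p q = 0 := fun p q hp => by
    by_contra h; exact hB.disj p (hB.supp p q h).2.1 hp
  refine ⟨fun p q => by rw [hA.symm, hB.symm], fun p q h => ?_, fun p => ?_, fun d hd hs => ?_⟩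
  · by_cases h1 : A p q = 0
    · have := hB.supp p q (by simpa [h1] using h)
      simp [this]
    · have := hA.supp p q h1
      simp [this]
  · simp [Finset.sum_add_distrib, hA.even, hB.even]
  obtain ⟨c, c1, c2, c3⟩ := choose_vals _ hB.two (∑ p ∈ K, d p)
  -- chords
  let κ : V → V → ZMod 2 × ZMod 2 := fun p q =>
    if G.Adj p q ∧ p ∈ K ∧ q ∈ K ∧ B p q = 0 then (1, 1) else 0
  have κs : ∀ p q, κ p q = κ q p := fun p q => by
    have : (G.Adj p q ∧ p ∈ K ∧ q ∈ K ∧ B p q = 0) ↔ (G.Adj q p ∧ q ∈ K ∧ p ∈ K ∧ B q p = 0) := by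
      rw [G.adj_comm, hB.symm]; tauto
    simp only [κ, this]
  have κ0 : ∀ p, κ p p = 0 := fun p => by simp [κ]
  have κsupp : ∀ p q, κ p q ≠ 0 → G.Adj p q ∧ p ∈ K ∧ q ∈ K ∧ B p q = 0 := fun p q h => by
    by_contra h'; exact h (by simp only [κ, h', if_false])
  have csupp : ∀ p q, c (p, q) ≠ 0 → p ∈ K ∧ q ∈ H ∧ G.Adj p q := fun p q h => by
    by_contra h'
    exact h (c2 _ (by simp only [Finset.mem_filter, Finset.mem_product]; tauto))
  have ctot : ∑ p, ∑ q, c (p, q) = ∑ p ∈ K, d p := by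
    rw [← c3, ← Fintype.sum_prod_type']
    symm
    refine Finset.sum_subset (Finset.subset_univ _) fun a _ ha => c2 a ha
  -- demand on K
  let d1 : V → ZMod 2 × ZMod 2 := fun p => (if p ∈ K then d p else 0) + ∑ q, c (p, q) + ∑ q, κ p q
  have d1K : ∀ p, d1 p ≠ 0 → p ∈ K := fun p h => by
    by_contra hp
    apply h
    have e1 : ∑ q, c (p, q) = 0 := Finset.sum_eq_zero fun q _ => by
      by_contra h; exact hp (csupp p q h).1
    have e2 : ∑ q, κ p q = 0 := Finset.sum_eq_zero fun q _ => by
      by_contra h; exact hp (κsupp p q h).2.1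
    simp [d1, hp, e1, e2]
  obtain ⟨φ1, f1, f2, f3⟩ := transport h2 (fun p q => B p q ≠ 0)
    (fun p q h => by rwa [hB.symm]) (fun p q h => (hB.supp p q h).1.ne) x d1
    (fun p hp => hB.conn p (d1K p hp)) (by
      simp only [d1, Finset.sum_add_distrib, ctot, sum_symm κ κs κ0]
      simp [h2])
  let d2 : V → ZMod 2 × ZMod 2 := fun p => (if p ∈ H then d p else 0) + ∑ q, c (q, p)
  have dsplit : ∀ p, d p = (if p ∈ H then d p else 0) + (if p ∈ K then d p else 0) := fun p => by
    by_cases hp : p ∈ K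
    · simp [hp, hB.disj p hp]
    · by_cases hp' : p ∈ H
      · simp [hp, hp']
      · simp [hp, hp', hd p (by simp [hp, hp'])]
  obtain ⟨φ2, g1, g2, g3, g4⟩ := hA.flow d2 (fun p hp => by
      have e1 : ∑ q, c (q, p) = 0 := Finset.sum_eq_zero fun q _ => by
        by_contra h; exact hp (csupp q p h).2.1
      simp [d2, hp, e1]) (by
      simp only [d2, Finset.sum_add_distrib]
      rw [Finset.sum_comm, ctot]
      rw [Finset.sum_congr rfl fun p _ => dsplit p, Finset.sum_add_distrib] at hs
      simpa using hs)
  refine ⟨fun p q => φ1 p q + φ2 p q + κ p q + (c (p, q) + c (q, p)), fun p q => ?_,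
    fun p q h => ?_, fun p => ?_, fun p q hp hq hpq hAB => ?_⟩
  · simp only; rw [f1 p q, g1 p q, κs p q, add_comm (c (p, q))]
  · by_contra hcon
    apply h
    have e1 : φ1 p q = 0 := by
      by_contra h; have := hB.supp p q (f2 p q h); apply hcon; simp [this]
    have e2 : φ2 p q = 0 := by
      by_contra h; have := g2 p q h; apply hcon; simp [this]
    have e3 : κ p q = 0 := by
      by_contra h; have := κsupp p q h; apply hcon; simp [this]
    have e4 : c (p, q) = 0 := by
      by_contra h; have := csupp p q h; apply hcon; simp [this]
    have e5 : c (q, p) = 0 := by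
      by_contra h; have := csupp q p h; apply hcon; simp [this, this.2.2.symm]
    simp [e1, e2, e3, e4, e5]
  · simp only [Finset.sum_add_distrib, f3, g3, d1, d2]
    conv_rhs => rw [dsplit p]
    generalize (∑ q, c (p, q)) = a
    generalize (∑ q, c (q, p)) = b
    generalize (∑ q, κ p q) = e
    generalize (if p ∈ H then d p else 0) = i
    generalize (if p ∈ K then d p else 0) = j
    have : j + a + e + (i + b) + e + (a + b) = i + j + (a + a) + (b + b) + (e + e) := by abel
    rw [this]; simp [h2]
  · have hA0 : A p q = 0 ∧ B p q = 0 := by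
      rcases Finset.mem_union.1 hp with hp | hp
      · have := hBH p q hp; simp [this] at hAB; exact ⟨hAB, this⟩
      · have := hAK p q hp; simp [this] at hAB; exact ⟨this, hAB⟩
    have e1 : φ1 p q = 0 := by
      by_contra h; exact f2 p q h hA0.2
    have keyHK : ∀ p q, p ∈ K → q ∈ H → G.Adj p q →
        φ2 p q = 0 ∧ κ p q = 0 ∧ c (q, p) = 0 ∧ c (p, q) ≠ 0 := by
      intro p q hp hq hpq
      refine ⟨?_, ?_, ?_, ?_⟩
      · by_contra h; exact hB.disj p hp (g2 p q h).2.1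
      · by_contra h; exact hB.disj q (κsupp p q h).2.2.1 hq
      · by_contra h; exact hB.disj q (csupp q p h).1 hq
      · exact c1 _ (by simp [hp, hq, hpq])
    simp only [e1, zero_add]
    rcases Finset.mem_union.1 hp with hp | hp <;> rcases Finset.mem_union.1 hq with hq | hq
    · have e3 : κ p q = 0 := by
        by_contra h; exact hB.disj p (κsupp p q h).2.1 hp
      have e4 : c (p, q) = 0 := by
        by_contra h; exact hB.disj p (csupp p q h).1 hp
      have e5 : c (q, p) = 0 := by
        by_contra h; exact hB.disj q (csupp q p h).1 hq
      simpa [e3, e4, e5] using g4 p q hp hq hpq hA0.1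
    · obtain ⟨k1, k2, k3, k4⟩ := keyHK q p hq hp hpq.symm
      rw [g1 p q, κs p q, k1, k2, k3]; simpa using k4
    · obtain ⟨k1, k2, k3, k4⟩ := keyHK p q hp hq hpq
      rw [k1, k2, k3]; simpa using k4
    · have e2 : φ2 p q = 0 := by
        by_contra h; exact hB.disj p hp (g2 p q h).2.1
      have e4 : c (p, q) = 0 := by
        by_contra h; exact hB.disj q hq (csupp p q h).2.1
      have e5 : c (q, p) = 0 := by
        by_contra h; exact hB.disj p hp (csupp q p h).2.1
      have e3 : κ p q = (1, 1) := by simp [κ, hpq, hp, hq, hA0.2]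
      rw [e2, e3, e4, e5]; decide

/-- number of edges between two sets -/
noncomputable def ee {V : Type*} (G : SimpleGraph V) (A B : Finset V) : ℕ :=
  #{e ∈ A ×ˢ B | G.Adj e.1 e.2}

lemma ee_union_right {V : Type*} (G : SimpleGraph V) (A B C : Finset V) (h : Disjoint B C) :
    ee G A (B ∪ C) = ee G A B + ee G A C := by
  unfold ee
  rw [Finset.product_union, Finset.filter_union, Finset.card_union_of_disjoint]
  refine Finset.disjoint_filter_filter ?_
  rw [Finset.disjoint_product]; exact Or.inr h

lemma ee_comm {V : Type*} (G : SimpleGraph V) (A B : Finset V) : ee G A B = ee G B A := by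
  unfold ee
  refine Finset.card_bij (fun e _ => (e.2, e.1)) ?_ ?_ ?_
  · rintro ⟨a, b⟩ h; simp only [Finset.mem_filter, Finset.mem_product] at *
    exact ⟨⟨h.1.2, h.1.1⟩, h.2.symm⟩
  · rintro ⟨a, b⟩ _ ⟨c, d⟩ _ h; simp only [Prod.mk.injEq] at *; exact ⟨h.2, h.1⟩
  · rintro ⟨a, b⟩ h; simp only [Finset.mem_filter, Finset.mem_product] at *
    exact ⟨(b, a), ⟨⟨h.1.2, h.1.1⟩, h.2.symm⟩, rfl⟩

lemma ee_union_left {V : Type*} (G : SimpleGraph V) (A B C : Finset V) (h : Disjoint B C) :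
    ee G (B ∪ C) A = ee G B A + ee G C A := by
  rw [ee_comm, ee_union_right G A B C h, ee_comm G A B, ee_comm G A C]

lemma three_cut {V : Type*} [Fintype V] (G : SimpleGraph V) (hconn : EdgeConnGe G 3)
    (A : Finset V) (h1 : A.Nonempty) (h2 : Aᶜ.Nonempty) : 3 ≤ ee G A Aᶜ := by
  by_contra hlt
  push Not at hlt
  let T : Finset (Sym2 V) := Finset.image (fun e : V × V => s(e.1, e.2))
    {e ∈ A ×ˢ Aᶜ | G.Adj e.1 e.2}
  have hT : (T : Set (Sym2 V)).ncard < 3 := by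
    rw [Set.ncard_coe_finset]
    exact lt_of_le_of_lt Finset.card_image_le hlt
  have hc := hconn.2 _ hT
  obtain ⟨a, ha⟩ := h1
  obtain ⟨b, hb⟩ := h2
  obtain ⟨w⟩ := hc.preconnected a b
  obtain ⟨d, hd, hd1, hd2⟩ := w.exists_boundary_dart (A : Set V) (by simpa using ha)
    (by simpa using hb)
  have hadj := d.adj
  rw [SimpleGraph.deleteEdges_adj] at hadj
  apply hadj.2
  simp only [T, Finset.coe_image, Set.mem_image, Finset.mem_coe, Finset.mem_filter,
    Finset.mem_product, Finset.mem_compl]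
  exact ⟨(d.fst, d.snd), ⟨⟨by simpa using hd1, by simpa using hd2⟩, hadj.1⟩, rfl⟩

lemma ee_pos_two {V : Type*} (G : SimpleGraph V) (K H : Finset V) (x y a b : V)
    (hx : x ∈ K) (hy : y ∈ K) (ha : a ∈ H) (hb : b ∈ H) (h1 : G.Adj x a) (h2 : G.Adj y b)
    (hne : (x, a) ≠ (y, b)) : 2 ≤ #{e ∈ K ×ˢ H | G.Adj e.1 e.2} := by
  refine Finset.one_lt_card.2 ⟨(x, a), ?_, (y, b), ?_, hne⟩ <;> simp [*]

lemma step {V : Type*} [Fintype V] (G : SimpleGraph V) (hconn : EdgeConnGe G 3)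
    (H : Finset V) (h1 : H.Nonempty) (h2 : Hᶜ.Nonempty) : ∃ K x B, ExtK G H K x B := by
  by_cases hx : ∃ x ∈ Hᶜ, ∃ a ∈ H, ∃ b ∈ H, a ≠ b ∧ G.Adj x a ∧ G.Adj x b
  · obtain ⟨x, hx, a, ha, b, hb, hab, hxa, hxb⟩ := hx
    refine ⟨{x}, x, fun _ _ => 0, by simp, by simp, by simp, ?_, ?_, by simp, ?_⟩
    · intro p hp; rw [Finset.mem_singleton.1 hp]
    · intro p hp; rw [Finset.mem_singleton.1 hp]; simpa using hx
    · exact ee_pos_two G _ _ x x a b (by simp) (by simp) ha hb hxa hxb (by simpa using hab)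
  let F : Finset (Finset V) := {X ∈ Hᶜ.powerset | X.Nonempty ∧ ee G X (Hᶜ \ X) ≤ 1}
  have hF : F.Nonempty := ⟨Hᶜ, Finset.mem_filter.2 ⟨by simp, h2, by simp [ee]⟩⟩
  obtain ⟨X, hXF, hmin⟩ := Finset.exists_min_image F Finset.card hF
  simp only [F, Finset.mem_filter, Finset.mem_powerset] at hXF hmin
  obtain ⟨hXH, hXne, hXe⟩ := hXF
  have hXc : Xᶜ = H ∪ (Hᶜ \ X) := by
    ext t; have := @hXH t; simp only [Finset.mem_union, Finset.mem_sdiff, Finset.mem_compl] at *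
    tauto
  have h3 := three_cut G hconn X hXne (by rw [hXc]; exact h1.mono Finset.subset_union_left)
  rw [hXc, ee_union_right _ _ _ _ (by
    rw [Finset.disjoint_left]; intro t ht; simp [ht])] at h3
  have h4 : 1 < ee G X H := by lia
  obtain ⟨⟨x, a⟩, hxa, ⟨y, b⟩, hyb, hne⟩ := Finset.one_lt_card.1 h4
  simp only [Finset.mem_filter, Finset.mem_product] at hxa hyb
  have hxy : x ≠ y := by
    rintro rfl
    refine hx ⟨x, hXH hxa.1.1, a, hxa.1.2, b, hyb.1.2, ?_, hxa.2, hyb.2⟩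
    rintro rfl; exact hne rfl
  obtain ⟨K, hKX, hxK, hyK, B, b1, b2, b3, b4⟩ := twoflow G X x y hxa.1.1 (by
    intro A hAX hxA hyA
    change 2 ≤ ee G A (X \ A)
    by_contra hlt
    have e0 : ee G X (Hᶜ \ X) = ee G A (Hᶜ \ X) + ee G (X \ A) (Hᶜ \ X) := by
      rw [← ee_union_left _ _ _ _ Finset.disjoint_sdiff, Finset.union_sdiff_of_subset hAX]
    have e1 : ee G A (Hᶜ \ A) = ee G A (X \ A) + ee G A (Hᶜ \ X) := by
      rw [← ee_union_right]
      · congr 1; ext t; have := @hXH t; have := @hAX t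
        simp only [Finset.mem_union, Finset.mem_sdiff] at *; tauto
      · rw [Finset.disjoint_left]; intro t ht; simp only [Finset.mem_sdiff] at *; tauto
    have e2 : ee G (X \ A) (Hᶜ \ (X \ A)) = ee G (X \ A) A + ee G (X \ A) (Hᶜ \ X) := by
      rw [← ee_union_right]
      · congr 1; ext t; have := @hXH t; have := @hAX t
        simp only [Finset.mem_union, Finset.mem_sdiff] at *; tauto
      · rw [Finset.disjoint_left]; intro t ht; have := @hAX t; simp only [Finset.mem_sdiff] at *; tauto
    rw [ee_comm G (X \ A) A] at e2
    have hcard : #(X \ A) + #A = #X := Finset.card_sdiff_add_card_eq_card hAX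
    have hA0 : 0 < #A := Finset.card_pos.2 ⟨x, hxA⟩
    have hyXA : y ∈ X \ A := Finset.mem_sdiff.2 ⟨hyb.1.1, hyA⟩
    have hA1 : 0 < #(X \ A) := Finset.card_pos.2 ⟨y, hyXA⟩
    by_cases hcase : ee G A (Hᶜ \ X) = 0
    · have := hmin A ⟨hAX.trans hXH, ⟨x, hxA⟩, by lia⟩
      lia
    · have := hmin (X \ A) ⟨Finset.sdiff_subset.trans hXH, ⟨y, hyXA⟩, by lia⟩
      lia)
  refine ⟨K, x, B, b1, b2, b3, b4, fun p hp => by simpa using hXH (hKX hp), hxK, ?_⟩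
  exact ee_pos_two G K H x y a b hxK hyK hxa.1.2 hyb.1.2 hxa.2 hyb.2 hne

lemma first {V : Type*} [Fintype V] (G : SimpleGraph V) (hG : IsCubic G)
    (hconn : EdgeConnGe G 3) (u v : V) (huv : G.Adj u v) :
    ∃ K x B, ExtK G {v} K x B ∧ u ∈ K ∧ ∃ q, B u q ≠ 0 := by
  have hv := hG v
  have hNv : #{q | G.Adj v q} = 3 := by
    rw [← hv, ← Set.ncard_coe_finset]; congr 1; ext t; simp
  obtain ⟨w, hw, hwu⟩ := Finset.exists_mem_ne (by rw [hNv]; norm_num : 1 < #{q | G.Adj v q}) u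
  replace hw : G.Adj v w := by simpa using hw
  let X : Finset V := {v}ᶜ
  have hev : ee G X {v} = 3 := by
    rw [← hNv]
    refine Finset.card_bij (fun e _ => e.1) ?_ ?_ ?_
    · rintro ⟨a, b⟩ h
      simp only [Finset.mem_filter, Finset.mem_product, Finset.mem_singleton, Finset.mem_univ,
        true_and] at *
      rw [← h.1.2]; exact h.2.symm
    · rintro ⟨a, b⟩ h ⟨c, d⟩ h' he
      simp only [Finset.mem_filter, Finset.mem_product, Finset.mem_singleton] at *
      rw [he, h.1.2, h'.1.2]
    · intro b h
      have h : G.Adj v b := by simpa using h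
      exact ⟨(b, v), by simp [X, h.symm, h.ne.symm], rfl⟩
  obtain ⟨K, hKX, hxK, hyK, B, b1, b2, b3, b4⟩ := twoflow G X u w (by simp [X, huv.ne]) (by
    intro A hAX hxA hyA
    change 2 ≤ ee G A (X \ A)
    have hvA : v ∉ A := fun h => by have := hAX h; simp [X] at this
    have e0 : ee G X {v} = ee G A {v} + ee G (X \ A) {v} := by
      rw [← ee_union_left _ _ _ _ Finset.disjoint_sdiff, Finset.union_sdiff_of_subset hAX]
    have e1 : ee G A Aᶜ = ee G A (X \ A) + ee G A {v} := by
      rw [← ee_union_right]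
      · congr 1; ext t; by_cases ht : t = v <;> simp [X, ht, hvA]
      · simp [X]
    have e2 : ee G (X \ A) (X \ A)ᶜ = ee G (X \ A) A + ee G (X \ A) {v} := by
      rw [← ee_union_right]
      · congr 1; ext t; by_cases ht : t = v <;> simp [X, ht]
      · simpa using hvA
    rw [ee_comm G (X \ A) A] at e2
    have c1 := three_cut G hconn A ⟨u, hxA⟩ ⟨w, by simpa using hyA⟩
    have c2 := three_cut G hconn (X \ A) ⟨w, by simp [X, hyA, hw.ne.symm]⟩ ⟨u, by simp [hxA]⟩
    lia)
  refine ⟨K, u, B, ⟨b1, b2, b3, b4, fun p hp => by simpa [X] using hKX hp, hxK, ?_⟩, hxK, ?_⟩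
  · exact ee_pos_two G K {v} u w v v hxK hyK (by simp) (by simp) huv hw.symm (by simpa using hwu.symm)
  · rcases (Relation.ReflTransGen.cases_head (b4 w hyK)) with h | ⟨c, hc, _⟩
    · exact absurd h.symm hwu
    · exact ⟨c, hc⟩

lemma finish {V : Type*} [Fintype V] (G : SimpleGraph V) (hconn : EdgeConnGe G 3) :
    ∀ (n : ℕ) (H : Finset V) (A : V → V → ZMod 2), #Hᶜ ≤ n → H.Nonempty → Good_s12 G H A →
    ∃ A', Good_s12 G univ A' ∧ ∀ p ∈ H, ∀ q, A' p q = A p q := by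
  intro n
  induction n with
  | zero =>
    intro H A hn hH hA
    have : Hᶜ = ∅ := by simpa using hn
    rw [Finset.compl_eq_empty_iff] at this
    exact ⟨A, this ▸ hA, fun _ _ _ => rfl⟩
  | succ n ih =>
    intro H A hn hH hA
    by_cases hc : Hᶜ.Nonempty
    · obtain ⟨K, x, B, hE⟩ := step G hconn H hH hc
      obtain ⟨A', h1, h2⟩ := ih (H ∪ K) _ (by
        have : #(H ∪ K)ᶜ < #Hᶜ := by
          apply Finset.card_lt_card
          refine Finset.ssubset_iff_of_subset ?_ |>.2 ⟨x, ?_, ?_⟩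
          · intro t; simp; tauto
          · simpa using hE.disj x hE.mem
          · simp [hE.mem]
        lia) (hH.mono Finset.subset_union_left) (hA.ext hE)
      refine ⟨A', h1, fun p hp q => ?_⟩
      rw [h2 p (Finset.mem_union_left _ hp)]
      have : B p q = 0 := by
        by_contra h; exact hE.disj p (hE.supp p q h).2.1 hp
      simp [this]
    · have : Hᶜ = ∅ := by simpa using hc
      rw [Finset.compl_eq_empty_iff] at this
      exact ⟨A, this ▸ hA, fun _ _ _ => rfl⟩

lemma exists_good {V : Type*} [Fintype V] (G : SimpleGraph V) (hG : IsCubic G)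
    (hconn : EdgeConnGe G 3) (u v : V) (huv : G.Adj u v) :
    ∃ A, Good_s12 G univ A ∧ (∀ q, A v q = 0) ∧ ∃ q, A u q ≠ 0 := by
  obtain ⟨K, x, B, hE, huK, q, hq⟩ := first G hG hconn u v huv
  have h0 : Good_s12 G {v} (fun _ _ => 0) := by
    refine ⟨by simp, by simp, by simp, fun d hd hs => ⟨fun _ _ => 0, by simp, by simp, ?_, ?_⟩⟩
    · intro p
      by_cases hp : p = v
      · subst hp
        rw [Finset.sum_eq_single p (fun b _ hb => hd b (by simpa using hb)) (by simp)] at hs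
        simp [hs]
      · simp [hd p (by simpa using hp)]
    · intro p q hp hq hpq
      rw [Finset.mem_singleton.1 hp, Finset.mem_singleton.1 hq] at hpq
      exact absurd rfl hpq.ne
  obtain ⟨A, h1, h2⟩ := finish G hconn _ ({v} ∪ K) _ le_rfl ⟨v, by simp⟩ (h0.ext hE)
  refine ⟨A, h1, fun t => ?_, q, ?_⟩
  · rw [h2 v (by simp)]
    by_contra h
    have : B v t ≠ 0 := by simpa using h
    exact hE.disj v (hE.supp v t this).2.1 (by simp)
  · rw [h2 u (by simp [huK])]; simpa using hq

lemma fin_sum {V M : Type*} [Fintype V] [AddCommMonoid M] (G : SimpleGraph V) (f : V → V → M)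
    (hs : ∀ p q, f p q = f q p) (h0 : ∀ p q, ¬ G.Adj p q → f p q = 0) (v : V) :
    ∑ᶠ e ∈ G.incidenceSet v, Sym2.lift ⟨f, hs⟩ e = ∑ q, f v q := by
  have himg : G.incidenceSet v = (fun q => s(v, q)) '' (({q | G.Adj v q} : Finset V) : Set V) := by
    ext e
    induction e using Sym2.ind with
    | _ a b =>
      simp only [SimpleGraph.mk'_mem_incidenceSet_iff, Set.mem_image, Finset.coe_filter,
        Finset.mem_univ, true_and, Set.mem_ofPred_eq, Sym2.eq_iff]
      constructor
      · rintro ⟨h, rfl | rfl⟩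
        · exact ⟨b, h, by simp⟩
        · exact ⟨a, h.symm, by simp⟩
      · rintro ⟨q, h, ⟨rfl, rfl⟩ | ⟨rfl, rfl⟩⟩
        · exact ⟨h, by simp⟩
        · exact ⟨h.symm, by simp⟩
  rw [himg, finsum_mem_image (by
    intro a _ b _ h
    exact Sym2.congr_right.1 h), finsum_mem_coe_finset]
  simp only [Sym2.lift_mk]
  exact Finset.sum_subset (Finset.subset_univ _) fun q _ hq => h0 v q (by simpa using hq)

lemma colorSet_eq_s12 {V C : Type*} (G : SimpleGraph V) (c : Sym2 V → C) (v : V) :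
    colorSet G c v = (fun q => c s(v, q)) '' G.neighborSet v := by
  unfold colorSet
  ext t
  constructor
  · rintro ⟨e, he, rfl⟩
    obtain ⟨h1, h2⟩ := he
    obtain ⟨q, rfl⟩ := Sym2.mem_iff_exists.1 h2
    exact ⟨q, h1, rfl⟩
  · rintro ⟨q, hq, rfl⟩
    exact ⟨s(v, q), ⟨hq, by simp⟩, rfl⟩

lemma nbrs_s12 {V : Type*} [Fintype V] (G : SimpleGraph V) (hG : IsCubic G) (u v : V)
    (huv : G.Adj u v) : ∃ a b, v ≠ a ∧ v ≠ b ∧ a ≠ b ∧ G.neighborSet u = {v, a, b} := by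
  obtain ⟨x, y, z, h1, h2, h3, h4⟩ := Set.ncard_eq_three.1 (hG u)
  have hv : v ∈ G.neighborSet u := huv
  rw [h4] at hv
  rcases hv with rfl | rfl | rfl
  · exact ⟨y, z, h1, h2, h3, h4⟩
  · exact ⟨x, z, h1.symm, h3, h2, by rw [h4]; ext; simp; tauto⟩
  · exact ⟨x, y, h2.symm, h3.symm, h1, by rw [h4]; ext; simp; tauto⟩

lemma nbr_sum {V M : Type*} [Fintype V] [AddCommMonoid M] (G : SimpleGraph V) (f : V → M) (u v a b : V)
    (h1 : v ≠ a) (h2 : v ≠ b) (h3 : a ≠ b) (h4 : G.neighborSet u = {v, a, b})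
    (h0 : ∀ q, ¬ G.Adj u q → f q = 0) : ∑ q, f q = f v + f a + f b := by
  have : ∑ q ∈ ({v, a, b} : Finset V), f q = ∑ q, f q := by
    refine Finset.sum_subset (Finset.subset_univ _) fun q _ hq => h0 q fun hadj => hq ?_
    have : q ∈ G.neighborSet u := hadj
    rw [h4] at this
    simpa using this
  rw [← this, Finset.sum_insert (by simp [h1, h2]), Finset.sum_insert (by simp [h3]),
    Finset.sum_singleton, add_assoc]

lemma five (z a b c d : ZMod 2 × ZMod 2) (hz : z ≠ 0) (hc : c ≠ 0) (hd : d ≠ 0)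
    (h1 : z + a + b = 0) (h2 : z + c + d = 0) :
    (({((0 : ZMod 2), z), (1, a), (1, b)} : Set (ZMod 2 × ZMod 2 × ZMod 2)) ∪
      {(0, z), (0, c), (0, d)}).ncard = 5 := by
  have key : ∀ z a b c d : ZMod 2 × ZMod 2, z ≠ 0 → c ≠ 0 → d ≠ 0 → z + a + b = 0 →
      z + c + d = 0 → a ≠ b ∧ z ≠ c ∧ z ≠ d ∧ c ≠ d := by
    intro z a b c d hz hc hd h1 h2
    have hs : ∀ x y : ZMod 2 × ZMod 2, x + y = 0 → x = y := by decide
    have e : ∀ x : ZMod 2 × ZMod 2, x + x = 0 := by decide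
    refine ⟨?_, ?_, ?_, ?_⟩ <;> rintro rfl
    · rw [add_assoc, e, add_zero] at h1; exact hz h1
    · rw [e, zero_add] at h2; exact hd h2
    · rw [add_right_comm, e, zero_add] at h2; exact hc h2
    · rw [add_assoc, e, add_zero] at h2; exact hz h2
  obtain ⟨k1, k2, k3, k4⟩ := key z a b c d hz hc hd h1 h2
  have : (({((0 : ZMod 2), z), (1, a), (1, b)} : Set (ZMod 2 × ZMod 2 × ZMod 2)) ∪
      {(0, z), (0, c), (0, d)}) =
      (({(0, z), (1, a), (1, b), (0, c), (0, d)} : Finset (ZMod 2 × ZMod 2 × ZMod 2)) : Set _) := by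
    ext t; simp; tauto
  rw [this, Set.ncard_coe_finset]
  repeat rw [Finset.card_insert_of_notMem (by simp [k1, k2, k3, k4])]
  simp

end Flow8

theorem stmt_12 {V : Type*} [Fintype V] (G : SimpleGraph V)
    (hG : IsCubic G) (hconn : EdgeConnGe G 3) (u v : V) (huv : G.Adj u v) :
    ∃ θ : Sym2 V → ZMod 2 × ZMod 2 × ZMod 2,
      IsNowhereZeroFlow G θ ∧ IsRichAt G θ u v := by
  classical
  obtain ⟨A, hA, hv0, q0, hq0⟩ := exists_good G hG hconn u v huv
  obtain ⟨φ, p1, p2, p3, p4⟩ := hA.flow (fun _ => 0) (by simp) (by simp)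
  have hs : ∀ p q, (A p q, φ p q) = (A q p, φ q p) := fun p q => by rw [hA.symm, p1]
  have hA0 : ∀ p q, ¬ G.Adj p q → A p q = 0 := fun p q h => by
    by_contra h'; exact h (hA.supp p q h').1
  have hφ0 : ∀ p q, ¬ G.Adj p q → φ p q = 0 := fun p q h => by
    by_contra h'; exact h (p2 p q h').1
  have hnz : ∀ p q, G.Adj p q → A p q = 0 → φ p q ≠ 0 := fun p q =>
    p4 p q (Finset.mem_univ _) (Finset.mem_univ _)
  refine ⟨Sym2.lift ⟨fun p q => (A p q, φ p q), hs⟩, ⟨?_, ?_⟩, ?_⟩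
  · intro e he
    induction e using Sym2.ind with
    | _ a b =>
      rw [SimpleGraph.mem_edgeSet] at he
      rw [Sym2.lift_mk]
      intro h
      simp only [Prod.mk_eq_zero] at h
      exact hnz a b he h.1 h.2
  · intro w
    rw [fin_sum G (fun p q => (A p q, φ p q)) hs (fun p q h => by
      simp only [hA0 p q h, hφ0 p q h]; rfl) w]
    rw [← Prod.mk_zero_zero, Prod.ext_iff, Prod.fst_sum, Prod.snd_sum]
    exact ⟨hA.even w, p3 w⟩
  · obtain ⟨a, b, a1, a2, a3, a4⟩ := nbrs_s12 G hG u v huv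
    obtain ⟨c, d, c1, c2, c3, c4⟩ := nbrs_s12 G hG v u huv.symm
    have s1 := (nbr_sum G (A u) u v a b a1 a2 a3 a4 (hA0 u)).symm.trans (hA.even u)
    have s2 := (nbr_sum G (φ u) u v a b a1 a2 a3 a4 (hφ0 u)).symm.trans (p3 u)
    have s3 := (nbr_sum G (φ v) v u c d c1 c2 c3 c4 (hφ0 v)).symm.trans (p3 v)
    have huv0 : A u v = 0 := by rw [hA.symm]; exact hv0 u
    have hvc : G.Adj v c := by
      have : c ∈ G.neighborSet v := by rw [c4]; simp
      exact this
    have hvd : G.Adj v d := by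
      have : d ∈ G.neighborSet v := by rw [c4]; simp
      exact this
    have hq : q0 = a ∨ q0 = b := by
      have : q0 ∈ G.neighborSet u := (hA.supp u q0 hq0).1
      rw [a4] at this
      rcases this with rfl | h
      · exact absurd huv0 hq0
      · exact h
    have hab : A u a = 1 ∧ A u b = 1 := by
      have dec : ∀ x y : ZMod 2, 0 + x + y = 0 → (x ≠ 0 ∨ y ≠ 0) → x = 1 ∧ y = 1 := by decide
      rw [huv0] at s1
      refine dec _ _ s1 ?_
      rcases hq with rfl | rfl
      · exact Or.inl hq0
      · exact Or.inr hq0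
    unfold IsRichAt
    rw [colorSet_eq_s12, colorSet_eq_s12, a4, c4]
    simp only [Set.image_insert_eq, Set.image_singleton, Sym2.lift_mk, huv0, hab.1, hab.2, hv0]
    rw [p1 v u] at s3 ⊢
    exact five _ _ _ _ _ (hnz u v huv huv0) (hnz v c hvc (hv0 c)) (hnz v d hvd (hv0 d)) s2 s3
end
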